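/- arXiv:2209.00317 — 3 statements merged into one kernel-verified Lean document; each statement's English description precedes it below -/
import Mathlib

section
/- Let F be a finite field with q elements and let PSL₂(q) denote the quotient of the special linear group SL₂(F) by its center. Suppose each of the two numbers (q−1)/gcd(q−1, 2) and (q+1)/gcd(q+1, 2) has at most two distinct prime divisors and at most one prime divisor p with p² dividing it (i.e., if p² and p'² both divide the number for primes p, p', then p = p'). Then the power graph of PSL₂(q) is chordal. -/
/-- The power graph of a group: distinct `x` and `y` are adjacent iff one is a power
of the other. -/
def powerGraph (G : Type*) [Group G] : SimpleGraph G :=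
  SimpleGraph.fromRel (fun x y => x ∈ Subgroup.zpowers y)

/-- A graph is chordal if it has no induced cycle on at least 4 vertices. -/
def IsChordal {V : Type*} (Γ : SimpleGraph V) : Prop :=
  ∀ n : ℕ, 4 ≤ n → IsEmpty (SimpleGraph.cycleGraph n ↪g Γ)

/-- The projective special linear group `PSL_n(F)`: the quotient of `SL_n(F)` by its center. -/
abbrev PSL (n : ℕ) (F : Type*) [Field F] :=
  Matrix.SpecialLinearGroup (Fin n) F ⧸ Subgroup.center (Matrix.SpecialLinearGroup (Fin n) F)

/-- `m` has at most two distinct prime divisors and at most one prime divisor with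
multiplicity greater than one. -/
def GoodNumber (m : ℕ) : Prop :=
  m.primeFactors.card ≤ 2 ∧
    ∀ p p' : ℕ, p.Prime → p'.Prime → p ^ 2 ∣ m → p' ^ 2 ∣ m → p = p'

section ComparabilityGraph

/-!
Write `x ≤ y` if `x` is a power of `y`. This relation is transitive, so it changes direction at
every vertex of an induced cycle of the power graph, and the cycle contains a path
`x₀ ≤ x₁ ≥ x₂ ≤ x₃ ≥ x₄` whose vertices at distance two are incomparable. Lift `x₁`, `x₂` and `x₃`
to `SL₂(q)`. The lift of `x₂` is not scalar, so its centralizer is commutative and the lifts of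
`x₁` and `x₃` commute.

If the characteristic polynomial of the lift of `x₁` has discriminant zero, `x₁` has prime order
and is a power of `x₂`, hence of `x₃`. Otherwise the centralizer of the lift embeds into the
multiplicative group of the algebraic closure through the eigenvalues at a common eigenvector, and
Frobenius permutes the roots of `X² - tX + 1`, so this centralizer is cyclic of exponent dividing
`q - 1` or `q + 1`. Its only elements of order at most two are `±1`, so `x₁` and `x₃` lie in a
cyclic group whose order divides `(q ± 1) / gcd(q ± 1, 2)`. Two incomparable divisors of a number
with the assumed factorization cannot both fail to be prime powers, so `x₁`, say, has prime power
order; but then its powers `x₀` and `x₂` are comparable.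
-/

open SimpleGraph Relation

lemma cycleGraph_adj_add_one {n : ℕ} (i : Fin (n + 2)) : (cycleGraph (n + 2)).Adj i (i + 1) :=
  cycleGraph_adj.2 (.inr (add_sub_cancel_left i 1))

open scoped Fin.CommRing in
lemma not_cycleGraph_adj_add_one_add_one {n : ℕ} (i : Fin (n + 4)) :
    ¬ (cycleGraph (n + 4)).Adj i (i + 1 + 1) := by
  have three_ne_zero : (3 : Fin (n + 4)) ≠ 0 := by simp [Fin.ext_iff, Nat.mod_eq_of_lt]
  rw [cycleGraph_adj]
  rintro (h | h)
  · exact three_ne_zero (by linear_combination -h)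
  · exact one_ne_zero (α := Fin (n + 4)) (by linear_combination h)

variable {V : Type*} {r : V → V → Prop}

lemma symmGen_of_fromRel_adj {x y : V} (h : (fromRel r).Adj x y) : SymmGen r x y :=
  ((fromRel_adj r x y).1 h).2

lemma incompRel_of_not_fromRel_adj {x y : V} (hne : x ≠ y) (h : ¬ (fromRel r).Adj x y) :
    IncompRel r x y :=
  not_symmGen_iff.1 fun hxy => h ((fromRel_adj r x y).2 ⟨hne, hxy⟩)

/- By transitivity the relation changes direction at every vertex of an induced cycle, so five
consecutive vertices, the first of them not a peak, form an up-down path. -/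
theorem isChordal_fromRel [IsTrans V r]
    (h : ∀ x₀ x₁ x₂ x₃ x₄, r x₀ x₁ → r x₂ x₁ → r x₂ x₃ → r x₄ x₃ →
      IncompRel r x₀ x₂ → IncompRel r x₁ x₃ → ¬ IncompRel r x₂ x₄) :
    IsChordal (fromRel r) := by
  intro n hn
  obtain ⟨n, rfl⟩ := Nat.exists_eq_add_of_le' hn
  refine ⟨fun f => ?_⟩
  have comparable (i) : SymmGen r (f i) (f (i + 1)) :=
    symmGen_of_fromRel_adj (f.map_adj_iff.2 (cycleGraph_adj_add_one i))
  have incomparable (i) : IncompRel r (f i) (f (i + 1 + 1)) := by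
    refine incompRel_of_not_fromRel_adj (f.injective.ne ?_)
      (f.map_adj_iff.not.2 (not_cycleGraph_adj_add_one_add_one i))
    simp [add_assoc, Fin.ext_iff, Fin.val_add, Nat.mod_eq_of_lt]
  have peak (i) (hi : r (f i) (f (i + 1))) : r (f (i + 1 + 1)) (f (i + 1)) :=
    (comparable (i + 1)).resolve_left fun h' => (incomparable i).1 (_root_.trans hi h')
  have valley (i) (hi : r (f (i + 1)) (f i)) : r (f (i + 1)) (f (i + 1 + 1)) :=
    (comparable (i + 1)).resolve_right fun h' => (incomparable i).2 (_root_.trans h' hi)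
  have not_ascent (i) : ¬ r (f i) (f (i + 1)) := fun h₀ =>
    have h₁ := peak i h₀
    have h₂ := valley (i + 1) h₁
    h _ _ _ _ _ h₀ h₁ h₂ (peak (i + 1 + 1) h₂) (incomparable i) (incomparable (i + 1))
      (incomparable (i + 1 + 1))
  exact not_ascent (0 + 1) (valley 0 ((comparable 0).resolve_left (not_ascent 0)))

end ComparabilityGraph

section PowerRelation

variable {G : Type*} [Group G] {g x y z : G}

/-- The relation underlying the power graph, `x` being a power (with integer exponent) of `y`. -/
abbrev IsPowerOf (x y : G) : Prop :=
  x ∈ Subgroup.zpowers y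

instance : IsTrans G IsPowerOf :=
  ⟨fun _ _ _ hxy hyz => Subgroup.zpowers_le.2 hyz hxy⟩

lemma IsPowerOf.map {H : Type*} [Group H] (h : IsPowerOf x y) (f : G →* H) :
    IsPowerOf (f x) (f y) := by
  obtain ⟨k, rfl⟩ := h
  exact ⟨k, (map_zpow f y k).symm⟩

lemma mem_zpowers_of_pow_orderOf_eq_one [Finite G] [IsCyclic G] (h : x ^ orderOf y = 1) :
    x ∈ Subgroup.zpowers y := by
  classical
  have := Fintype.ofFinite G
  let solutions : Finset G := {c | c ^ orderOf y = 1}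
  have zpowers_subset : (Subgroup.zpowers y : Set G).toFinset ⊆ solutions := fun c hc => by
    simpa [solutions, ← orderOf_dvd_iff_pow_eq_one] using
      orderOf_dvd_of_mem_zpowers (Set.mem_toFinset.1 hc)
  have card_solutions_le : solutions.card ≤ (Subgroup.zpowers y : Set G).toFinset.card := by
    rw [Set.toFinset_card, ← Nat.card_eq_fintype_card, SetLike.coe_sort_coe, Nat.card_zpowers]
    exact IsCyclic.card_pow_eq_one_le (orderOf_pos y)
  have hx : x ∈ solutions := by simpa [solutions] using h
  rw [← Finset.eq_of_subset_of_card_le zpowers_subset card_solutions_le] at hx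
  simpa using hx

lemma isPowerOf_of_orderOf_dvd (hg : IsOfFinOrder g) (hx : IsPowerOf x g) (hy : IsPowerOf y g)
    (h : orderOf x ∣ orderOf y) : IsPowerOf x y := by
  have : Finite (Subgroup.zpowers g) := hg.finite_zpowers
  have hxy : (⟨x, hx⟩ : Subgroup.zpowers g) ^ orderOf (⟨y, hy⟩ : Subgroup.zpowers g) = 1 := by
    rwa [← orderOf_dvd_iff_pow_eq_one, Subgroup.orderOf_mk, Subgroup.orderOf_mk]
  exact IsPowerOf.map (mem_zpowers_of_pow_orderOf_eq_one hxy) (Subgroup.subtype _)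

lemma not_incompRel_isPowerOf_of_isPrimePow_orderOf (hg : IsPrimePow (orderOf g))
    (hx : IsPowerOf x g) (hy : IsPowerOf y g) : ¬ IncompRel IsPowerOf x y := by
  have hfin : IsOfFinOrder g := orderOf_pos_iff.1 hg.pos
  obtain ⟨p, k, hp, -, hpk⟩ := hg
  obtain ⟨i, -, hi⟩ := (Nat.dvd_prime_pow hp.nat_prime).1 (hpk ▸ orderOf_dvd_of_mem_zpowers hx)
  obtain ⟨j, -, hj⟩ := (Nat.dvd_prime_pow hp.nat_prime).1 (hpk ▸ orderOf_dvd_of_mem_zpowers hy)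
  rintro ⟨hxy, hyx⟩
  rcases le_total i j with hij | hji
  · exact hxy (isPowerOf_of_orderOf_dvd hfin hx hy (hi ▸ hj ▸ pow_dvd_pow p hij))
  · exact hyx (isPowerOf_of_orderOf_dvd hfin hy hx (hi ▸ hj ▸ pow_dvd_pow p hji))

lemma IsPowerOf.symm_of_pow_prime_eq_one {p : ℕ} (hp : p.Prime) (hy : y ^ p = 1) (hx : x ≠ 1)
    (h : IsPowerOf x y) : IsPowerOf y x := by
  have hyp : orderOf y ∣ p := orderOf_dvd_of_pow_eq_one hy
  have hxp : orderOf x = p :=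
    (hp.eq_one_or_self_of_dvd _ ((orderOf_dvd_of_mem_zpowers h).trans hyp)).resolve_left
      (orderOf_eq_one_iff.not.2 hx)
  exact isPowerOf_of_orderOf_dvd (isOfFinOrder_iff_pow_eq_one.2 ⟨p, hp.pos, hy⟩)
    (Subgroup.mem_zpowers y) h (hxp ▸ hyp)

lemma commute_of_isPowerOf_mk {a b : G}
    (h : IsPowerOf (a : G ⧸ Subgroup.center G) (b : G ⧸ Subgroup.center G)) : Commute a b := by
  obtain ⟨k, hk⟩ := h
  have hcenter : (b ^ k)⁻¹ * a ∈ Subgroup.center G := QuotientGroup.eq.1 hk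
  have hb : Commute b (b ^ k * ((b ^ k)⁻¹ * a)) :=
    ((Commute.refl b).zpow_right k).mul_right (Subgroup.mem_center_iff.1 hcenter b)
  rw [mul_inv_cancel_left] at hb
  exact hb.symm

end PowerRelation

lemma exists_prime_sq_dvd_of_primeFactors_eq {a b : ℕ} (ha : a ≠ 0) (hb : b ≠ 0)
    (h : a.primeFactors = b.primeFactors) (hab : ¬ a ∣ b) :
    ∃ p, p.Prime ∧ p ^ 2 ∣ a ∧ b.factorization p < a.factorization p := by
  obtain ⟨p, hp, hlt⟩ : ∃ p, p.Prime ∧ b.factorization p < a.factorization p := by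
    simpa using (Nat.factorization_prime_le_iff_dvd ha hb).not.2 hab
  have hpa : p ∈ a.primeFactors :=
    Nat.mem_primeFactors.2 ⟨hp, Nat.dvd_of_factorization_pos (by lia), ha⟩
  have hpb : 1 ≤ b.factorization p :=
    (hp.dvd_iff_one_le_factorization hb).1 (Nat.dvd_of_mem_primeFactors (h ▸ hpa))
  exact ⟨p, hp, (hp.pow_dvd_iff_le_factorization ha).2 (by lia), hlt⟩

namespace GoodNumber

variable {m a b : ℕ}

lemma ne_zero (hm : GoodNumber m) : m ≠ 0 := by
  rintro rfl
  exact absurd (hm.2 2 3 Nat.prime_two Nat.prime_three (dvd_zero _) (dvd_zero _)) (by decide)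

lemma of_dvd (hm : GoodNumber m) (h : a ∣ m) : GoodNumber a :=
  ⟨(Finset.card_le_card (Nat.primeFactors_mono h hm.ne_zero)).trans hm.1,
    fun p p' hp hp' hpa hpa' => hm.2 p p' hp hp' (hpa.trans h) (hpa'.trans h)⟩

lemma primeFactors_eq_of_not_isPrimePow (hm : GoodNumber m) (ha : a ∣ m) (ha1 : a ≠ 1)
    (h : ¬ IsPrimePow a) : a.primeFactors = m.primeFactors := by
  refine Finset.eq_of_subset_of_card_le (Nat.primeFactors_mono ha hm.ne_zero) (hm.1.trans ?_)
  have ha0 : a ≠ 0 := ne_zero_of_dvd_ne_zero hm.ne_zero ha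
  exact Finset.one_lt_card_iff_nontrivial.2
    ((Nat.not_isPrimePow_iff_nontrivial_of_two_le (by lia)).1 h)

/- If neither number is a prime power, both involve every prime factor of `m`, so each of the two
primes witnessing incomparability divides `m` at least twice. -/
lemma isPrimePow_or_isPrimePow (hm : GoodNumber m) (ha : a ∣ m) (hb : b ∣ m)
    (hab : IncompRel (· ∣ ·) a b) : IsPrimePow a ∨ IsPrimePow b := by
  by_contra! hpow
  have ha0 : a ≠ 0 := ne_zero_of_dvd_ne_zero hm.ne_zero ha
  have hb0 : b ≠ 0 := ne_zero_of_dvd_ne_zero hm.ne_zero hb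
  have hprimes : a.primeFactors = b.primeFactors :=
    (hm.primeFactors_eq_of_not_isPrimePow ha (fun h => hab.1 (h ▸ one_dvd b)) hpow.1).trans
      (hm.primeFactors_eq_of_not_isPrimePow hb (fun h => hab.2 (h ▸ one_dvd a)) hpow.2).symm
  obtain ⟨p, hp, hpa, hlt⟩ := exists_prime_sq_dvd_of_primeFactors_eq ha0 hb0 hprimes hab.1
  obtain ⟨p', hp', hpb', hlt'⟩ := exists_prime_sq_dvd_of_primeFactors_eq hb0 ha0 hprimes.symm hab.2
  obtain rfl := hm.2 p p' hp hp' (hpa.trans ha) (hpb'.trans hb)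
  exact lt_asymm hlt hlt'

end GoodNumber

theorem isChordal_powerGraph {G : Type*} [Group G]
    (h : ∀ x y z : G, x ≠ 1 → IsPowerOf x y → IsPowerOf x z → IncompRel IsPowerOf y z →
      ∃ g, GoodNumber (orderOf g) ∧ IsPowerOf y g ∧ IsPowerOf z g) :
    IsChordal (powerGraph G) := by
  refine isChordal_fromRel (r := IsPowerOf) ?_
  intro x₀ x₁ x₂ x₃ x₄ h₀₁ h₂₁ h₂₃ h₄₃ h₀₂ h₁₃ h₂₄
  have hx₂ : x₂ ≠ 1 := fun hx => h₀₂.2 (hx ▸ one_mem _)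
  obtain ⟨g, hg, h₁, h₃⟩ := h x₂ x₁ x₃ hx₂ h₂₁ h₂₃ h₁₃
  have hfin : IsOfFinOrder g := orderOf_ne_zero_iff.1 hg.ne_zero
  have horder : IncompRel (· ∣ ·) (orderOf x₁) (orderOf x₃) :=
    ⟨fun hdvd => h₁₃.1 (isPowerOf_of_orderOf_dvd hfin h₁ h₃ hdvd),
      fun hdvd => h₁₃.2 (isPowerOf_of_orderOf_dvd hfin h₃ h₁ hdvd)⟩
  rcases hg.isPrimePow_or_isPrimePow (orderOf_dvd_of_mem_zpowers h₁)
    (orderOf_dvd_of_mem_zpowers h₃) horder with hpow | hpow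
  · exact not_incompRel_isPowerOf_of_isPrimePow_orderOf hpow h₀₁ h₂₁ h₀₂
  · exact not_incompRel_isPowerOf_of_isPrimePow_orderOf hpow h₂₃ h₄₃ h₂₄

section FinTwo

open Matrix

variable {R F K : Type*} [CommRing R] [Field F] [Field K]

lemma sq_sub_trace_smul_add_det_smul_one (A : Matrix (Fin 2) (Fin 2) R) :
    A ^ 2 - A.trace • A + A.det • 1 = 0 := by
  nontriviality R
  simpa [charpoly_fin_two, Algebra.smul_def] using aeval_self_charpoly A

lemma discr_smul_one_add_smul (A : Matrix (Fin 2) (Fin 2) R) (a b : R) :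
    (a • (1 : Matrix (Fin 2) (Fin 2) R) + b • A).discr = b ^ 2 * A.discr := by
  simp only [discr_fin_two, trace_fin_two, det_fin_two, Matrix.add_apply,
    Matrix.smul_apply, smul_eq_mul, one_apply_eq, one_apply_ne zero_ne_one,
    one_apply_ne one_ne_zero]
  ring

lemma notMem_range_scalar_of_discr_ne_zero {A : Matrix (Fin 2) (Fin 2) R} (hA : A.discr ≠ 0) :
    A ∉ Set.range (scalar (Fin 2)) := by
  rintro ⟨r, rfl⟩
  apply hA
  simp only [discr_fin_two, trace_fin_two, det_fin_two, scalar_apply, diagonal_apply_eq,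
    diagonal_apply_ne _ zero_ne_one]
  ring

lemma pow_char_eq_scalar {p : ℕ} [Fact p.Prime] [CharP R p] {A : Matrix (Fin 2) (Fin 2) R} {a : R}
    (htr : A.trace = 2 * a) (hdet : A.det = a ^ 2) : A ^ p = scalar (Fin 2) (a ^ p) := by
  have hcomm : Commute A (scalar (Fin 2) a) := (scalar_commute a (fun _ => Commute.all _ _) A).symm
  have hsq : (A - scalar (Fin 2) a) ^ 2 = 0 := by
    rw [hcomm.sub_sq, ← sq_sub_trace_smul_add_det_smul_one A, htr, hdet, ← map_pow,
      scalar_apply, scalar_apply, ← smul_one_eq_diagonal, ← smul_one_eq_diagonal, mul_smul_comm,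
      mul_one, mul_smul, two_smul, two_mul, smul_add]
  have hp : (A - scalar (Fin 2) a) ^ p = 0 := pow_eq_zero_of_le (Fact.out : p.Prime).two_le hsq
  rwa [sub_pow_char_of_commute p hcomm, sub_eq_zero, ← map_pow] at hp

lemma exists_eq_smul_one_add_smul_of_commute {A B : Matrix (Fin 2) (Fin 2) F}
    (hA : A ∉ Set.range (scalar (Fin 2))) (h : Commute A B) :
    ∃ a b : F, B = a • (1 : Matrix (Fin 2) (Fin 2) F) + b • A := by
  let offScalar (C : Matrix (Fin 2) (Fin 2) F) : Fin 3 → F := ![C 0 1, C 1 0, C 0 0 - C 1 1]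
  have hA' : offScalar A ≠ 0 := by
    rw [Ne, cons_eq_zero_iff, cons_eq_zero_iff, cons_eq_zero_iff, sub_eq_zero]
    rintro ⟨h₀₁, h₁₀, hdiag, -⟩
    refine hA ⟨A 0 0, ?_⟩
    ext i j
    fin_cases i <;> fin_cases j <;> simp [h₀₁, h₁₀, hdiag]
  -- The entries of `A * B - B * A` are, up to sign, the coordinates of this cross product.
  have hcross : offScalar A ⨯₃ offScalar B = 0 := by
    have h₀₀ := congrFun₂ h.eq 0 0
    have h₀₁ := congrFun₂ h.eq 0 1
    have h₁₀ := congrFun₂ h.eq 1 0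
    simp only [mul_apply, Fin.sum_univ_two] at h₀₀ h₀₁ h₁₀
    rw [cross_apply, cons_eq_zero_iff, cons_eq_zero_iff, cons_eq_zero_iff]
    refine ⟨?_, ?_, ?_, Subsingleton.elim _ _⟩ <;>
      simp only [offScalar, cons_val] <;> grind
  obtain ⟨b, hb⟩ : ∃ b : F, b • offScalar A = offScalar B := by
    by_contra! hindep
    exact crossProduct_ne_zero_iff_linearIndependent.2
      ((LinearIndependent.pair_iff' hA').2 hindep) hcross
  refine ⟨B 0 0 - b * A 0 0, b, ?_⟩
  have hb₀₁ : b * A 0 1 = B 0 1 := congrFun hb 0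
  have hb₁₀ : b * A 1 0 = B 1 0 := congrFun hb 1
  have hdiag : b * (A 0 0 - A 1 1) = B 0 0 - B 1 1 := congrFun hb 2
  have hb₁₁ : B 1 1 = B 0 0 - b * A 0 0 + b * A 1 1 := by linear_combination hdiag
  ext i j
  fin_cases i <;> fin_cases j <;> simp [hb₀₁, hb₁₀, hb₁₁]

lemma commute_of_commute_of_notMem_range_scalar {A B C : Matrix (Fin 2) (Fin 2) F}
    (hA : A ∉ Set.range (scalar (Fin 2))) (hB : Commute A B) (hC : Commute A C) :
    Commute B C := by
  obtain ⟨a, b, rfl⟩ := exists_eq_smul_one_add_smul_of_commute hA hB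
  exact ((Commute.one_left C).smul_left a).add_left (hC.smul_left b)

lemma exists_map_mulVec_eq_smul_of_commute {A B : Matrix (Fin 2) (Fin 2) F}
    (hA : A ∉ Set.range (scalar (Fin 2))) (h : Commute A B) (f : F →+* K) {v : Fin 2 → K} {c : K}
    (hv : A.map f *ᵥ v = c • v) : ∃ d : K, B.map f *ᵥ v = d • v := by
  obtain ⟨a, b, rfl⟩ := exists_eq_smul_one_add_smul_of_commute hA h
  refine ⟨f a + f b * c, ?_⟩
  have hmap : (a • (1 : Matrix (Fin 2) (Fin 2) F) + b • A).map f = f a • 1 + f b • A.map f := by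
    rw [Matrix.map_add f (map_add f), map_smul' f _ _ (map_mul f), map_smul' f _ _ (map_mul f),
      Matrix.map_one f (map_zero f) (map_one f)]
  rw [hmap, add_mulVec, smul_mulVec, smul_mulVec, one_mulVec, hv, smul_smul, add_smul]

lemma eigenvalue_sq_sub_trace_mul_add_det {A : Matrix (Fin 2) (Fin 2) K} {c : K} {v : Fin 2 → K}
    (hv : v ≠ 0) (h : A *ᵥ v = c • v) : c ^ 2 - A.trace * c + A.det = 0 := by
  have hcv : (c ^ 2 - A.trace * c + A.det) • v = 0 := by
    have := congrArg (· *ᵥ v) (sq_sub_trace_smul_add_det_smul_one A)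
    simpa [add_mulVec, sub_mulVec, smul_mulVec, sq, ← mulVec_mulVec, mulVec_smul, h, smul_smul,
      add_smul, sub_smul] using this
  exact (smul_eq_zero.1 hcv).resolve_right hv

lemma exists_monoidHom_mulVec_eq_smul {M n : Type*} [Monoid M] [Fintype n] [DecidableEq n]
    (ρ : M →* Matrix n n K) {v : n → K} (hv : v ≠ 0) (h : ∀ m, ∃ c : K, ρ m *ᵥ v = c • v) :
    ∃ χ : M →* K, ∀ m, ρ m *ᵥ v = χ m • v := by
  choose χ hχ using h
  have eq_of_smul {c d : K} (hcd : c • v = d • v) : c = d := smul_left_injective K hv hcd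
  refine ⟨⟨⟨χ, eq_of_smul ?_⟩, fun m n => eq_of_smul ?_⟩, hχ⟩
  · rw [← hχ, map_one, one_mulVec, one_smul]
  · rw [← hχ, map_mul, ← mulVec_mulVec, hχ n, mulVec_smul, hχ m, smul_smul, mul_comm]

end FinTwo

lemma pow_card_sub_one_eq_one_or_pow_card_add_one_eq_one {F K : Type*} [Field F] [Fintype F]
    [Field K] [Algebra F K] {t : F} {c : K} (h : c ^ 2 - algebraMap F K t * c + 1 = 0) :
    c ^ (Fintype.card F - 1) = 1 ∨ c ^ (Fintype.card F + 1) = 1 := by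
  set q := Fintype.card F
  have hc : c ≠ 0 := by
    rintro rfl
    simp at h
  have hconj : (c ^ q) ^ 2 - algebraMap F K t * c ^ q + 1 = 0 := by
    rw [← map_zero (FiniteField.frobeniusAlgHom F K), ← h, map_add, map_sub, map_mul, map_pow,
      map_one, AlgHom.commutes, FiniteField.coe_frobeniusAlgHom]
  have hroots : (c ^ q - c) * (c ^ q * c - 1) = 0 := by
    linear_combination c * hconj - c ^ q * h
  rcases mul_eq_zero.1 hroots with h | h
  · left
    rw [pow_sub₀ c hc Fintype.card_pos, pow_one, sub_eq_zero.1 h, mul_inv_cancel₀ hc]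
  · right
    rw [pow_succ, sub_eq_zero.1 h]

lemma commute_coe_centralizer {G : Type*} [Group G] {a : G} (b : Subgroup.centralizer {a}) :
    Commute a b :=
  (Subgroup.mem_centralizer_singleton_iff.1 b.2).symm

section SpecialLinearGroup

open Matrix
open scoped MatrixGroups

variable {F : Type*} [Field F]

lemma neg_one_mem_center : (-1 : SL(2, F)) ∈ Subgroup.center SL(2, F) :=
  Subgroup.mem_center_iff.2 fun A => by simp

lemma commute_coe_iff {n R : Type*} [Fintype n] [DecidableEq n] [CommRing R]
    {A B : Matrix.SpecialLinearGroup n R} : Commute A.1 B.1 ↔ Commute A B :=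
  ⟨fun h => Subtype.ext h, fun h => congrArg Subtype.val h⟩

lemma commute_of_commute_of_notMem_center {A B C : SL(2, F)}
    (hA : A ∉ Subgroup.center SL(2, F)) (hB : Commute A B) (hC : Commute A C) : Commute B C := by
  have hscalar : A.1 ∉ Set.range (scalar (Fin 2)) := by
    rintro ⟨r, hr⟩
    refine hA (Subgroup.mem_center_iff.2 fun D => commute_coe_iff.1 ?_)
    exact hr ▸ (scalar_commute r (Commute.all r) D.1).symm
  exact commute_coe_iff.1 (commute_of_commute_of_notMem_range_scalar hscalar
    (commute_coe_iff.2 hB) (commute_coe_iff.2 hC))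

lemma trace_eq_two_or_eq_neg_two_of_discr_eq_zero {A : SL(2, F)} (hA : A.1.discr = 0) :
    A.1.trace = 2 ∨ A.1.trace = -2 := by
  rw [discr_fin_two, A.det_coe] at hA
  have hfactor : (A.1.trace - 2) * (A.1.trace + 2) = 0 := by linear_combination hA
  exact (mul_eq_zero.1 hfactor).imp sub_eq_zero.1 eq_neg_of_add_eq_zero_left

lemma pow_char_mem_center {p : ℕ} [Fact p.Prime] [CharP F p] {A : SL(2, F)}
    (hA : A.1.discr = 0) : A ^ p ∈ Subgroup.center SL(2, F) := by
  obtain ⟨a, ha, htr⟩ : ∃ a : F, a ^ 2 = 1 ∧ A.1.trace = 2 * a := by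
    rcases trace_eq_two_or_eq_neg_two_of_discr_eq_zero hA with h | h
    · exact ⟨1, by simp, by simpa using h⟩
    · exact ⟨-1, by simp, by simpa using h⟩
  refine Matrix.SpecialLinearGroup.mem_center_iff.2 ⟨a ^ p, ?_, ?_⟩
  · rw [Fintype.card_fin, ← pow_mul, mul_comm, pow_mul, ha, one_pow]
  · rw [Matrix.SpecialLinearGroup.coe_pow, pow_char_eq_scalar htr (A.det_coe.trans ha.symm)]

lemma eq_one_of_commute_of_trace_eq_two {A B : SL(2, F)} (hA : A.1.discr ≠ 0) (h : Commute A B)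
    (hB : B.1.trace = 2) : B = 1 := by
  obtain ⟨a, b, hab⟩ := exists_eq_smul_one_add_smul_of_commute
    (notMem_range_scalar_of_discr_ne_zero hA) (commute_coe_iff.2 h)
  have hdiscr : b ^ 2 * A.1.discr = 0 := by
    rw [← discr_smul_one_add_smul A.1 a b, ← hab, discr_fin_two, hB, B.det_coe]
    ring
  have hb : b = 0 := pow_eq_zero_iff two_ne_zero |>.1 ((mul_eq_zero.1 hdiscr).resolve_right hA)
  rw [hb, zero_smul, add_zero] at hab
  have hdet := B.det_coe
  rw [hab] at hB hdet
  simp only [trace_smul, trace_one, det_smul, det_one, Fintype.card_fin, smul_eq_mul, mul_one,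
    Nat.cast_ofNat] at hB hdet
  have ha : (a - 1) ^ 2 = 0 := by linear_combination hdet - hB
  have ha : a = 1 := sub_eq_zero.1 (pow_eq_zero_iff two_ne_zero |>.1 ha)
  exact Subtype.ext (hab.trans (by rw [ha, one_smul, Matrix.SpecialLinearGroup.coe_one]))

lemma mem_center_of_commute_of_sq_eq_one {A B : SL(2, F)} (hA : A.1.discr ≠ 0)
    (h : Commute A B) (hB : B ^ 2 = 1) : B ∈ Subgroup.center SL(2, F) := by
  have hdiscr : B.1.discr = 0 := by
    have hB' : B.1 ^ 2 = 1 := congrArg Subtype.val hB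
    have htrace := congrArg trace (sq_sub_trace_smul_add_det_smul_one B.1)
    simp only [hB', B.det_coe, one_smul, trace_add, trace_sub, trace_smul, smul_eq_mul, trace_one,
      trace_zero, Fintype.card_fin, Nat.cast_ofNat] at htrace
    rw [discr_fin_two, B.det_coe]
    linear_combination -htrace
  rcases trace_eq_two_or_eq_neg_two_of_discr_eq_zero hdiscr with htr | htr
  · rw [eq_one_of_commute_of_trace_eq_two hA h htr]
    exact one_mem _
  · have hneg : -B = 1 := eq_one_of_commute_of_trace_eq_two hA h.neg_right (by simp [htr])
    rw [← neg_neg B, hneg]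
    exact neg_one_mem_center

lemma pow_div_gcd_two_mem_center {A B : SL(2, F)} (hA : A.1.discr ≠ 0)
    (h : Commute A B) {N : ℕ} (hB : B ^ N = 1) :
    B ^ (N / N.gcd 2) ∈ Subgroup.center SL(2, F) := by
  refine mem_center_of_commute_of_sq_eq_one hA (h.pow_right _) ?_
  obtain ⟨k, hk⟩ := Nat.gcd_dvd_right N 2
  have hexp : N / N.gcd 2 * 2 = N * k :=
    calc
      N / N.gcd 2 * 2 = N / N.gcd 2 * (N.gcd 2 * k) := by rw [← hk]
      _ = N * k := by rw [← mul_assoc, Nat.div_mul_cancel (Nat.gcd_dvd_left N 2)]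
  rw [← pow_mul, hexp, pow_mul, hB, one_pow]

theorem exists_injective_monoidHom_centralizer (K : Type*) [Field K] [Algebra F K] [IsAlgClosed K]
    {A : SL(2, F)} (hA : A.1.discr ≠ 0) :
    ∃ χ : Subgroup.centralizer {A} →* K, Function.Injective χ ∧
      ∀ B, χ B ^ 2 - algebraMap F K B.1.1.trace * χ B + 1 = 0 := by
  let ρ : SL(2, F) →* Matrix (Fin 2) (Fin 2) K :=
    (algebraMap F K).mapMatrix.toMonoidHom.comp Matrix.SpecialLinearGroup.coeMonoidHom
  have htr (B) : (ρ B).trace = algebraMap F K B.1.trace :=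
    (AddMonoidHom.map_trace (algebraMap F K).toAddMonoidHom B.1).symm
  have hdet (B) : (ρ B).det = 1 := (Matrix.SpecialLinearGroup.map (algebraMap F K) B).det_coe
  obtain ⟨c, hc⟩ := Module.End.exists_eigenvalue (toLin' (ρ A))
  obtain ⟨v, hv⟩ := hc.exists_hasEigenvector
  have hvA : ρ A *ᵥ v = c • v := hv.apply_eq_smul
  have hvB (B : Subgroup.centralizer {A}) : ∃ d : K, ρ B *ᵥ v = d • v :=
    exists_map_mulVec_eq_smul_of_commute (notMem_range_scalar_of_discr_ne_zero hA)
      (commute_coe_iff.2 (commute_coe_centralizer B)) (algebraMap F K) hvA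
  obtain ⟨χ, hχ⟩ :=
    exists_monoidHom_mulVec_eq_smul (ρ.comp (Subgroup.centralizer {A}).subtype) hv.2 hvB
  have hroot (B) : χ B ^ 2 - algebraMap F K B.1.1.trace * χ B + 1 = 0 := by
    rw [← htr, ← hdet B.1]
    exact eigenvalue_sq_sub_trace_mul_add_det hv.2 (hχ B)
  refine ⟨χ, (injective_iff_map_eq_one χ).2 fun B hB => ?_, hroot⟩
  have htwo : B.1.1.trace = 2 := (algebraMap F K).injective <| by
    have := hroot B
    rw [hB] at this
    rw [map_ofNat]
    linear_combination -this
  exact Subtype.ext (eq_one_of_commute_of_trace_eq_two hA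
    (commute_coe_centralizer B) htwo)

theorem exists_generator_centralizer [Fintype F] {A : SL(2, F)} (hA : A.1.discr ≠ 0) :
    ∃ g : SL(2, F), (∀ B, Commute A B → IsPowerOf B g) ∧ Commute A g ∧
      (g ^ (Fintype.card F - 1) = 1 ∨ g ^ (Fintype.card F + 1) = 1) := by
  obtain ⟨χ, hχ, hroot⟩ := exists_injective_monoidHom_centralizer (AlgebraicClosure F) hA
  obtain ⟨g, hg⟩ := (isCyclic_of_injective_ringHom χ hχ).exists_generator
  have pow_eq_one {N : ℕ} (h : χ g ^ N = 1) : (g : SL(2, F)) ^ N = 1 := by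
    rw [← map_pow, map_eq_one_iff χ hχ] at h
    exact congrArg Subtype.val h
  refine ⟨g, fun B hB => ?_, ?_, ?_⟩
  · have hgB := hg ⟨B, Subgroup.mem_centralizer_singleton_iff.2 hB.eq.symm⟩
    exact IsPowerOf.map hgB (Subgroup.subtype _)
  · exact commute_coe_centralizer g
  · exact (pow_card_sub_one_eq_one_or_pow_card_add_one_eq_one (hroot g)).imp pow_eq_one pow_eq_one

theorem exists_goodNumber_orderOf_mk_isPowerOf [Fintype F]
    (h1 : GoodNumber ((Fintype.card F - 1) / (Fintype.card F - 1).gcd 2))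
    (h2 : GoodNumber ((Fintype.card F + 1) / (Fintype.card F + 1).gcd 2))
    {A : SL(2, F)} (hA : A.1.discr ≠ 0) :
    ∃ g : SL(2, F), GoodNumber (orderOf (g : PSL 2 F)) ∧ ∀ B, Commute A B → IsPowerOf B g := by
  obtain ⟨g, hpow, hAg, hg⟩ := exists_generator_centralizer hA
  have orderOf_dvd {N : ℕ} (hN : g ^ N = 1) : orderOf (g : PSL 2 F) ∣ N / N.gcd 2 :=
    orderOf_dvd_of_pow_eq_one
      ((QuotientGroup.eq_one_iff _).2 (pow_div_gcd_two_mem_center hA hAg hN))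
  exact ⟨g, hg.elim (fun h => h1.of_dvd (orderOf_dvd h)) (fun h => h2.of_dvd (orderOf_dvd h)), hpow⟩

lemma exists_prime_pow_mem_center_of_discr_eq_zero [Finite F] {A : SL(2, F)} (hA : A.1.discr = 0) :
    ∃ p : ℕ, p.Prime ∧ A ^ p ∈ Subgroup.center SL(2, F) := by
  obtain ⟨p, hchar⟩ := CharP.exists F
  have : Fact p.Prime := ⟨CharP.char_is_prime F p⟩
  exact ⟨p, Fact.out, pow_char_mem_center hA⟩

end SpecialLinearGroup

theorem stmt6 (F : Type*) [Field F] [Fintype F] (q : ℕ) (hq : Fintype.card F = q)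
    (h1 : GoodNumber ((q - 1) / Nat.gcd (q - 1) 2))
    (h2 : GoodNumber ((q + 1) / Nat.gcd (q + 1) 2)) :
    IsChordal (powerGraph (PSL 2 F)) := by
  subst hq
  refine isChordal_powerGraph fun x y z hx hxy hxz hyz => ?_
  obtain ⟨X, rfl⟩ := QuotientGroup.mk_surjective x
  obtain ⟨Y, rfl⟩ := QuotientGroup.mk_surjective y
  obtain ⟨Z, rfl⟩ := QuotientGroup.mk_surjective z
  by_cases hY : Y.1.discr = 0
  · obtain ⟨p, hp, hYp⟩ := exists_prime_pow_mem_center_of_discr_eq_zero hY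
    have hyx := IsPowerOf.symm_of_pow_prime_eq_one hp ((QuotientGroup.eq_one_iff _).2 hYp) hx hxy
    exact absurd (_root_.trans hyx hxz) hyz.1
  · obtain ⟨g, hg, hpow⟩ := exists_goodNumber_orderOf_mk_isPowerOf h1 h2 hY
    have hYZ : Commute Y Z := commute_of_commute_of_notMem_center
      (mt (QuotientGroup.eq_one_iff X).2 hx) (commute_of_isPowerOf_mk hxy)
      (commute_of_isPowerOf_mk hxz)
    exact ⟨g, hg, (hpow Y (.refl Y)).map (QuotientGroup.mk' _),
      (hpow Z hYZ).map (QuotientGroup.mk' _)⟩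
end

section
/- Let F be a finite field with q elements and let n ≥ 3. The power graph of PSL_n(q), the quotient of SL_n(F) by its center, is chordal if and only if n = 3 and q ∈ {2, 4}. -/
/-!
If every element of a group has prime power order, then comparability of cyclic subgroups along an
induced path of the power graph propagates in one direction, so there is no induced cycle.
Conversely, suppose that `t₀, s₀, t₁, s₁, …` is a closed walk of commuting elements, the order of
every `tᵢ` being coprime to the order of every `sⱼ`, in which no `tᵢ` is a power of another `tⱼ` and
no `sᵢ` a power of another `sⱼ`. As `t` and `s` are powers of `t * s`, inserting the products of
consecutive terms yields an induced cycle.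

For `n ≥ 4` in characteristic `p`, take a `2 × 2` matrix `C` of order prime to `p` and `X` not
commuting with `C`. The unipotent matrices with upper right block `1` and `C` commute with
`diag(C, C)` and with its conjugate by the unipotent matrix with block `X`. For `n = 3`, three
transvections and three homologies of multiplier `a⁻³ ≠ 1`, scaled by `a` to determinant 1, form
such a walk; only in the fields with 2 and 4 elements does every unit `a` satisfy `a³ = 1`. For
these two fields, the Cayley–Hamilton theorem shows that one of the powers 3, 4, 5, 7 of every
matrix in `SL₃` is scalar.

Passing from `SL` to `PSL` is harmless: if the image of `g` is a power of the image of `h`, then `g`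
commutes with everything that commutes with `h`, so centralizers certify that no power relation
holds.
-/

open Subgroup
open scoped commutatorElement

section PowerGraph

variable {G : Type*} [Group G]

theorem powerGraph_adj {x y : G} :
    (powerGraph G).Adj x y ↔ x ≠ y ∧ (x ∈ zpowers y ∨ y ∈ zpowers x) :=
  SimpleGraph.fromRel_adj _ _ _

theorem zpow_mem_zpowers_zpow_of_gcd_dvd {a : G} {i j : ℤ}
    (h : (i.gcd (orderOf a) : ℤ) ∣ j) : a ^ j ∈ zpowers (a ^ i) := by
  obtain ⟨c, rfl⟩ := h
  refine ⟨i.gcdA (orderOf a) * c, ?_⟩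
  simp only [Int.gcd_eq_gcd_ab, add_mul, zpow_add, mul_assoc, zpow_mul, zpow_natCast,
    pow_orderOf_eq_one, one_zpow, mul_one]

theorem mem_zpowers_or_mem_zpowers_of_orderOf_eq_prime_pow {a x y : G} {p k : ℕ}
    (hp : p.Prime) (ha : orderOf a = p ^ k) (hx : x ∈ zpowers a) (hy : y ∈ zpowers a) :
    x ∈ zpowers y ∨ y ∈ zpowers x := by
  obtain ⟨i, rfl⟩ := mem_zpowers_iff.1 hx
  obtain ⟨j, rfl⟩ := mem_zpowers_iff.1 hy
  have gcd_eq_prime_pow (l : ℤ) : ∃ u, l.gcd (orderOf a) = p ^ u := by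
    have gcd_dvd : l.gcd (orderOf a) ∣ p ^ k :=
      ha ▸ Int.natCast_dvd_natCast.1 (Int.gcd_dvd_right l (orderOf a))
    obtain ⟨u, -, hu⟩ := (Nat.dvd_prime_pow hp).1 gcd_dvd
    exact ⟨u, hu⟩
  obtain ⟨u, hu⟩ := gcd_eq_prime_pow i
  obtain ⟨v, hv⟩ := gcd_eq_prime_pow j
  rcases le_total u v with huv | hvu
  · refine Or.inr (zpow_mem_zpowers_zpow_of_gcd_dvd
      (dvd_trans (Int.natCast_dvd_natCast.2 ?_) (Int.gcd_dvd_left j (orderOf a))))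
    exact hu ▸ hv ▸ pow_dvd_pow p huv
  · refine Or.inl (zpow_mem_zpowers_zpow_of_gcd_dvd
      (dvd_trans (Int.natCast_dvd_natCast.2 ?_) (Int.gcd_dvd_left i (orderOf a))))
    exact hu ▸ hv ▸ pow_dvd_pow p hvu

variable (G) in
/-- An *EPPO group*: every element has prime power order (the identity has order `p ^ 0`). -/
def IsEPPO : Prop :=
  ∀ a : G, ∃ p k : ℕ, p.Prime ∧ orderOf a = p ^ k

theorem IsEPPO.mem_zpowers_of_not_comparable (hG : IsEPPO G) {a b c : G}
    (hab : a ∈ zpowers b ∨ b ∈ zpowers a) (hbc : b ∈ zpowers c ∨ c ∈ zpowers b)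
    (hac : ¬(a ∈ zpowers c ∨ c ∈ zpowers a)) : b ∈ zpowers a := by
  refine hab.resolve_left fun ha => hac ?_
  rcases hbc with hb | hc
  · exact Or.inl (zpowers_le.2 hb ha)
  · obtain ⟨p, k, hp, hk⟩ := hG b
    exact mem_zpowers_or_mem_zpowers_of_orderOf_eq_prime_pow hp hk ha hc

theorem cycleGraph_adj_iff_eq_add_one {n : ℕ} [NeZero n] (hn : 2 ≤ n) {u v : Fin n} :
    (SimpleGraph.cycleGraph n).Adj u v ↔ v = u + 1 ∨ u = v + 1 := by
  obtain ⟨n, rfl⟩ := Nat.exists_eq_add_of_le' hn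
  rw [SimpleGraph.cycleGraph_adj, sub_eq_iff_eq_add', sub_eq_iff_eq_add', or_comm]

-- In an induced path `a, b, c, d` both `b ∈ ⟨a⟩` and `c ∈ ⟨b⟩`, so that `c ∈ ⟨a⟩`.
theorem IsEPPO.isChordal_powerGraph (hG : IsEPPO G) : IsChordal (powerGraph G) := by
  intro n hn
  obtain ⟨m, rfl⟩ := Nat.exists_eq_add_of_le' hn
  refine ⟨fun f => ?_⟩
  have comparable_succ (u : Fin (m + 4)) : f u ∈ zpowers (f (u + 1)) ∨ f (u + 1) ∈ zpowers (f u) :=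
    (powerGraph_adj.1 (f.map_adj_iff.2
      ((cycleGraph_adj_iff_eq_add_one (by omega)).2 (Or.inl rfl)))).2
  have one_ne_zero : (1 : Fin (m + 4)) ≠ 0 := by simp
  have two_ne_zero : (1 + 1 : Fin (m + 4)) ≠ 0 := by
    simp [Fin.ext_iff, Fin.val_add, Nat.mod_eq_of_lt]
  have three_ne_zero : (1 + (1 + 1) : Fin (m + 4)) ≠ 0 := by
    simp [Fin.ext_iff, Fin.val_add, Nat.mod_eq_of_lt]
  have not_comparable_add_two (u : Fin (m + 4)) :
      ¬(f u ∈ zpowers (f (u + 1 + 1)) ∨ f (u + 1 + 1) ∈ zpowers (f u)) := fun h => by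
    have adj : (powerGraph G).Adj (f u) (f (u + 1 + 1)) :=
      powerGraph_adj.2 ⟨f.injective.ne (by simpa [add_assoc] using two_ne_zero), h⟩
    rw [f.map_adj_iff, cycleGraph_adj_iff_eq_add_one (by omega)] at adj
    simp [add_assoc, one_ne_zero, three_ne_zero] at adj
  have mem_succ (u : Fin (m + 4)) : f (u + 1) ∈ zpowers (f u) :=
    hG.mem_zpowers_of_not_comparable (comparable_succ u) (comparable_succ (u + 1))
      (not_comparable_add_two u)
  exact not_comparable_add_two 0 (Or.inr (zpowers_le.2 (mem_succ 0) (mem_succ (0 + 1))))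

end PowerGraph

section CommutingCycle

variable {G : Type*} [Group G]

theorem exists_pow_mul_eq_left {p k : ℕ} (hpk : p.Coprime k) :
    ∃ e : ℕ, ∀ t s : G, t ^ p = 1 → s ^ k = 1 → Commute t s → (t * s) ^ e = t := by
  obtain ⟨e, e_mod_p, e_mod_k⟩ := Nat.chineseRemainder hpk 1 0
  refine ⟨e, fun t s ht hs hts => ?_⟩
  have t_pow : t ^ e = t ^ 1 :=
    pow_eq_pow_iff_modEq.2 (e_mod_p.of_dvd (orderOf_dvd_of_pow_eq_one ht))
  have s_pow : s ^ e = s ^ 0 :=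
    pow_eq_pow_iff_modEq.2 (e_mod_k.of_dvd (orderOf_dvd_of_pow_eq_one hs))
  rw [hts.mul_pow, t_pow, s_pow, pow_one, pow_zero, mul_one]

theorem left_mem_zpowers_of_mul_mem_zpowers_mul {p k : ℕ} (hpk : p.Coprime k) {t s t' s' : G}
    (ht : t ^ p = 1) (hs : s ^ k = 1) (hts : Commute t s)
    (ht' : t' ^ p = 1) (hs' : s' ^ k = 1) (hts' : Commute t' s')
    (h : t * s ∈ zpowers (t' * s')) : t ∈ zpowers t' := by
  obtain ⟨e, he⟩ := exists_pow_mul_eq_left (G := G) hpk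
  obtain ⟨j, hj⟩ := mem_zpowers_iff.1 h
  refine ⟨j, ?_⟩
  calc t' ^ j = ((t' * s') ^ e) ^ j := by rw [he t' s' ht' hs' hts']
    _ = ((t' * s') ^ j) ^ e := by rw [← zpow_natCast, ← zpow_natCast, zpow_comm]
    _ = t := by rw [hj, he t s ht hs hts]

theorem mul_mem_zpowers_mul_iff {p k : ℕ} (hpk : p.Coprime k) {t s t' s' : G}
    (ht : t ^ p = 1) (hs : s ^ k = 1) (hts : Commute t s)
    (ht' : t' ^ p = 1) (hs' : s' ^ k = 1) (hts' : Commute t' s') :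
    t * s ∈ zpowers (t' * s') ↔ t ∈ zpowers t' ∧ s ∈ zpowers s' := by
  refine ⟨fun h => ⟨?_, ?_⟩, fun ⟨h, h'⟩ => mul_mem ?_ ?_⟩
  · exact left_mem_zpowers_of_mul_mem_zpowers_mul hpk ht hs hts ht' hs' hts' h
  · rw [hts.eq, hts'.eq] at h
    exact left_mem_zpowers_of_mul_mem_zpowers_mul hpk.symm hs ht hts.symm hs' ht' hts'.symm h
  · obtain ⟨e, he⟩ := exists_pow_mul_eq_left (G := G) hpk
    have ht_mem := pow_mem (mem_zpowers (t' * s')) e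
    rw [he t' s' ht' hs' hts'] at ht_mem
    exact zpowers_le.2 ht_mem h
  · obtain ⟨e, he⟩ := exists_pow_mul_eq_left (G := G) hpk.symm
    have hs_mem := pow_mem (mem_zpowers (s' * t')) e
    rw [he s' t' hs' ht' hts'.symm, ← hts'.eq] at hs_mem
    exact zpowers_le.2 hs_mem h'

variable {m : ℕ}

/-- The vertices `t i, t i * s i, s i, t (i + 1) * s i` for `i : Fin m`, listed cyclically: the
subdivision of the closed walk `t 0, s 0, t 1, s 1, …` in which every edge is replaced by the
product of its ends. -/
def subdividedCycle [NeZero m] (t s : Fin m → G) (x : Fin m × Fin 4) : G :=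
  ![t x.1, t x.1, 1, t (x.1 + 1)] x.2 * ![1, s x.1, s x.1, s x.1] x.2

/-- The successor of a position in the cyclic order of `Fin m × Fin 4`. -/
def cyclicSucc [NeZero m] (x : Fin m × Fin 4) : Fin m × Fin 4 :=
  if x.2 = 3 then (x.1 + 1, 0) else (x.1, x.2 + 1)

theorem finProdFinEquiv_cyclicSucc [NeZero m] (x : Fin m × Fin 4) :
    finProdFinEquiv (cyclicSucc x) = finProdFinEquiv x + 1 := by
  obtain ⟨i, r⟩ := x
  by_cases hr : r = 3
  · have last_add_one : ((3 : Fin 4) : ℕ) + 4 * i + 1 = 4 * (i + 1) := by grind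
    ext
    simp only [cyclicSucc, hr, if_true, finProdFinEquiv_apply_val, Fin.val_add, Fin.val_zero,
      Fin.val_one', Nat.add_mod_mod, zero_add, last_add_one]
    rw [mul_comm m, Nat.mul_mod_mul_left]
  · have r_lt : (r : ℕ) + 1 < 4 := by grind
    have index_lt : (r : ℕ) + 4 * i + 1 < m * 4 := by grind
    ext
    simp only [cyclicSucc, hr, if_false, finProdFinEquiv_apply_val, Fin.val_add, Fin.val_one,
      Fin.val_one', Nat.add_mod_mod, Nat.mod_eq_of_lt r_lt, Nat.mod_eq_of_lt index_lt]
    ring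

theorem subdividedCycle_mem_zpowers_iff [NeZero m] {p k : ℕ} (hm : 2 ≤ m) (hpk : p.Coprime k)
    {t s : Fin m → G} (ht : ∀ i, t i ^ p = 1) (hs : ∀ i, s i ^ k = 1)
    (t_antichain : ∀ i j, t i ∈ zpowers (t j) → i = j)
    (s_antichain : ∀ i j, s i ∈ zpowers (s j) → i = j)
    (hts : ∀ i, Commute (t i) (s i)) (hts' : ∀ i, Commute (t (i + 1)) (s i))
    (x y : Fin m × Fin 4) :
    subdividedCycle t s x ∈ zpowers (subdividedCycle t s y) ↔
      x = y ∨ (x.2 = 0 ∨ x.2 = 2) ∧ (y = cyclicSucc x ∨ x = cyclicSucc y) := by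
  have : Nontrivial (Fin m) := Fin.nontrivial_iff_two_le.2 hm
  have add_one_ne (i : Fin m) : i + 1 ≠ i := by
    have : m ≠ 1 := by omega
    simpa
  have ne_one {u : Fin m → G} (hu : ∀ i j, u i ∈ zpowers (u j) → i = j) (i : Fin m) :
      u i ≠ 1 := by
    intro h
    obtain ⟨j, hj⟩ := exists_ne i
    exact hj (hu i j (h ▸ one_mem _)).symm
  have mem_iff {u : Fin m → G} (hu : ∀ i j, u i ∈ zpowers (u j) → i = j) (i j : Fin m) :
      u i ∈ zpowers (u j) ↔ i = j := ⟨hu i j, fun h => h ▸ mem_zpowers _⟩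
  obtain ⟨i, r⟩ := x
  obtain ⟨j, r'⟩ := y
  have t_pow (i : Fin m) (r : Fin 4) : ![t i, t i, 1, t (i + 1)] r ^ p = 1 := by
    fin_cases r <;> simp [ht]
  have s_pow (i : Fin m) (r : Fin 4) : ![1, s i, s i, s i] r ^ k = 1 := by
    fin_cases r <;> simp [hs]
  have comm (i : Fin m) (r : Fin 4) :
      Commute (![t i, t i, 1, t (i + 1)] r) (![1, s i, s i, s i] r) := by
    fin_cases r <;> simp [hts, hts']
  rw [subdividedCycle, subdividedCycle, mul_mem_zpowers_mul_iff hpk (t_pow i r) (s_pow i r)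
    (comm i r) (t_pow j r') (s_pow j r') (comm j r')]
  fin_cases r <;> fin_cases r' <;>
    simp [mem_iff t_antichain, mem_iff s_antichain, ne_one t_antichain, ne_one s_antichain,
      cyclicSucc]
  all_goals grind

theorem not_isChordal_powerGraph_of_commuting_cycle [NeZero m] {p k : ℕ} (hm : 2 ≤ m)
    (hpk : p.Coprime k) {t s : Fin m → G} (ht : ∀ i, t i ^ p = 1) (hs : ∀ i, s i ^ k = 1)
    (t_antichain : ∀ i j, t i ∈ zpowers (t j) → i = j)
    (s_antichain : ∀ i j, s i ∈ zpowers (s j) → i = j)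
    (hts : ∀ i, Commute (t i) (s i)) (hts' : ∀ i, Commute (t (i + 1)) (s i)) :
    ¬IsChordal (powerGraph G) := by
  have mem_iff := subdividedCycle_mem_zpowers_iff hm hpk ht hs t_antichain s_antichain hts hts'
  have inj : Function.Injective (subdividedCycle t s) := fun x y h => by
    have hxy := (mem_iff x y).1 (h ▸ mem_zpowers _)
    have hyx := (mem_iff y x).1 (h ▸ mem_zpowers _)
    grind [cyclicSucc]
  intro chordal
  refine (chordal (m * 4) (by omega)).false
    ⟨⟨subdividedCycle t s ∘ finProdFinEquiv.symm, inj.comp finProdFinEquiv.symm.injective⟩, ?_⟩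
  intro u v
  obtain ⟨x, rfl⟩ := finProdFinEquiv.surjective u
  obtain ⟨y, rfl⟩ := finProdFinEquiv.surjective v
  rw [cycleGraph_adj_iff_eq_add_one (by omega), ← finProdFinEquiv_cyclicSucc,
    ← finProdFinEquiv_cyclicSucc, finProdFinEquiv.apply_eq_iff_eq,
    finProdFinEquiv.apply_eq_iff_eq]
  simp only [Function.Embedding.coeFn_mk, Function.comp_apply, Equiv.symm_apply_apply,
    powerGraph_adj, inj.ne_iff, mem_iff]
  grind [cyclicSucc]

end CommutingCycle

theorem commute_of_commute_conj {G : Type*} [Group G] {p k : ℕ} (hpk : p.Coprime k) {s u : G}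
    (hs : s ^ k = 1) (hsu : ⁅s⁻¹, u⁆ ^ p = 1) (h : Commute s (u * s * u⁻¹)) : Commute s u := by
  have commutator_eq : ⁅s⁻¹, u⁆ = s⁻¹ * (u * s * u⁻¹) := by
    simp only [commutatorElement_def, inv_inv, mul_assoc]
  have commutator_pow : ⁅s⁻¹, u⁆ ^ k = 1 := by
    rw [commutator_eq, h.inv_left.mul_pow, inv_pow, conj_pow, hs]
    simp
  have commutator_eq_one : ⁅s⁻¹, u⁆ = 1 := (pow_eq_one_iff_of_coprime hpk).1 ⟨hsu, commutator_pow⟩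
  simpa using (commutatorElement_eq_one_iff_commute.1 commutator_eq_one).inv_left

section CentralKernel

variable {G H : Type*} [Group G] [Group H] {φ : H →* G}

theorem commute_of_map_mem_zpowers_map (hφ : φ.ker ≤ center H) {a b g : H}
    (hab : φ a ∈ zpowers (φ b)) (hbg : Commute b g) : Commute a g := by
  obtain ⟨k, hk⟩ := mem_zpowers_iff.1 hab
  have central : a * (b ^ k)⁻¹ ∈ center H := hφ (by simp [MonoidHom.mem_ker, ← hk])
  have central_commute : Commute (a * (b ^ k)⁻¹) g := (mem_center_iff.1 central g).symm
  simpa using central_commute.mul_left (hbg.zpow_left k)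

theorem not_isChordal_powerGraph_of_commuting_cycle_of_ker_le_center (hφ : φ.ker ≤ center H)
    {m : ℕ} [NeZero m] {p k : ℕ} (hm : 2 ≤ m) (hpk : p.Coprime k) {t s : Fin m → H}
    (ht : ∀ i, t i ^ p = 1) (hs : ∀ i, s i ^ k = 1)
    (t_separated : ∀ i j, i ≠ j → ∃ g, Commute (t j) g ∧ ¬Commute (t i) g)
    (s_separated : ∀ i j, i ≠ j → ∃ g, Commute (s j) g ∧ ¬Commute (s i) g)
    (hts : ∀ i, Commute (t i) (s i)) (hts' : ∀ i, Commute (t (i + 1)) (s i)) :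
    ¬IsChordal (powerGraph G) := by
  have antichain {u : Fin m → H} (hu : ∀ i j, i ≠ j → ∃ g, Commute (u j) g ∧ ¬Commute (u i) g)
      (i j : Fin m) (hij : φ (u i) ∈ zpowers (φ (u j))) : i = j := by
    by_contra ne
    obtain ⟨g, hj, hi⟩ := hu i j ne
    exact hi (commute_of_map_mem_zpowers_map hφ hij hj)
  exact not_isChordal_powerGraph_of_commuting_cycle hm hpk (t := φ ∘ t) (s := φ ∘ s)
    (fun i => by simp [← map_pow, ht]) (fun i => by simp [← map_pow, hs])
    (antichain t_separated) (antichain s_separated)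
    (fun i => (hts i).map φ) (fun i => (hts' i).map φ)

theorem ker_mk'_center_comp_le_center {ι : H →* G} (hι : Function.Injective ι) :
    ((QuotientGroup.mk' (center G)).comp ι).ker ≤ center H := by
  intro z hz
  rw [MonoidHom.mem_ker, MonoidHom.comp_apply, QuotientGroup.mk'_apply,
    QuotientGroup.eq_one_iff] at hz
  refine mem_center_iff.2 fun g => hι ?_
  simpa using mem_center_iff.1 hz (ι g)

end CentralKernel

section BlockMatrices

open Matrix

variable {m n k R : Type*} [Fintype m] [DecidableEq m] [Fintype n] [DecidableEq n] [Fintype k]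
  [DecidableEq k] [CommRing R]

/-- The homomorphism into `SL_n` given by a multiplicative family of matrices of determinant 1. -/
def specialLinearLift {M : Type*} [Monoid M] (f : M →* Matrix n n R) (hf : ∀ x, (f x).det = 1) :
    M →* SpecialLinearGroup n R where
  toFun x := ⟨f x, hf x⟩
  map_one' := Subtype.ext (map_one f)
  map_mul' x y := Subtype.ext (map_mul f x y)

/-- The block diagonal embedding `(A, D) ↦ diag(A, D)`. -/
def blockDiagonalHom :
    SpecialLinearGroup m R × SpecialLinearGroup n R →* SpecialLinearGroup (m ⊕ n) R :=
  specialLinearLift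
    { toFun x := fromBlocks x.1 0 0 x.2
      map_one' := by simp
      map_mul' x y := by simp [fromBlocks_multiply] }
    (fun x => by simp)

/-- The embedding of the additive group of `m × n` matrices as the unipotent radical of the block
upper triangular matrices. -/
def blockUnipotentHom : Multiplicative (Matrix m n R) →* SpecialLinearGroup (m ⊕ n) R :=
  specialLinearLift
    { toFun r := fromBlocks 1 r.toAdd 0 1
      map_one' := by simp
      map_mul' r r' := by simp [fromBlocks_multiply, add_comm] }
    (fun r => by simp)

/-- The embedding of `SL_m` as the upper left corner of `SL_n`, for a decomposition of the index
set `n` into `m` and a complement `k`. -/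
def cornerHom (e : m ⊕ k ≃ n) : SpecialLinearGroup m R →* SpecialLinearGroup n R :=
  specialLinearLift
    { toFun A := reindexAlgEquiv R R e (fromBlocks A 0 0 1)
      map_one' := by simp
      map_mul' A B := by rw [← map_mul, fromBlocks_multiply]; simp }
    (fun A => (det_reindexAlgEquiv R R e _).trans (by simp))

theorem cornerHom_injective (e : m ⊕ k ≃ n) :
    Function.Injective (cornerHom e : SpecialLinearGroup m R →* SpecialLinearGroup n R) := by
  intro A B h
  have blocks_eq := (reindexAlgEquiv R R e).injective (congrArg Subtype.val h)
  exact Subtype.ext (fromBlocks_inj.1 blocks_eq).1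

theorem commute_coe_iff_s7 {A B : SpecialLinearGroup n R} :
    Commute (A : Matrix n n R) (B : Matrix n n R) ↔ Commute A B :=
  ⟨fun h => Subtype.ext h, fun h => congrArg Subtype.val h⟩

theorem coe_blockDiagonalHom (x : SpecialLinearGroup m R × SpecialLinearGroup n R) :
    (blockDiagonalHom x : Matrix (m ⊕ n) (m ⊕ n) R) = fromBlocks x.1 0 0 x.2 :=
  rfl

theorem coe_blockUnipotentHom (r : Multiplicative (Matrix m n R)) :
    (blockUnipotentHom r : Matrix (m ⊕ n) (m ⊕ n) R) = fromBlocks 1 r.toAdd 0 1 :=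
  rfl

theorem commute_blockDiagonalHom_blockUnipotentHom_iff
    {x : SpecialLinearGroup m R × SpecialLinearGroup n R} {r : Multiplicative (Matrix m n R)} :
    Commute (blockDiagonalHom x) (blockUnipotentHom r) ↔
      (x.1 : Matrix m m R) * r.toAdd = r.toAdd * (x.2 : Matrix n n R) := by
  rw [← commute_coe_iff_s7, commute_iff_eq, coe_blockDiagonalHom, coe_blockUnipotentHom]
  simp [fromBlocks_multiply, fromBlocks_inj]

theorem blockUnipotentHom_pow_eq_one (p : ℕ) [CharP R p] (r : Multiplicative (Matrix m n R)) :
    blockUnipotentHom r ^ p = 1 := by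
  rw [← map_pow, ← ofAdd_toAdd r, ← ofAdd_nsmul, ← Nat.cast_smul_eq_nsmul R, CharP.cast_eq_zero,
    zero_smul, ofAdd_zero, map_one]

theorem blockDiagonalHom_mul_blockUnipotentHom_mul_inv
    (x : SpecialLinearGroup m R × SpecialLinearGroup n R) (r : Matrix m n R) :
    blockDiagonalHom x * blockUnipotentHom (.ofAdd r) * (blockDiagonalHom x)⁻¹ =
      blockUnipotentHom (.ofAdd ((x.1 : Matrix m m R) * r * (↑x.2⁻¹ : Matrix n n R))) := by
  refine mul_inv_eq_of_eq_mul (Subtype.ext ?_)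
  simp [coe_blockDiagonalHom, coe_blockUnipotentHom, fromBlocks_multiply, Matrix.mul_assoc,
    adjugate_mul]

theorem commutator_blockDiagonalHom_blockUnipotentHom_pow_eq_one (p : ℕ) [CharP R p]
    (x : SpecialLinearGroup m R × SpecialLinearGroup n R) (r : Matrix m n R) :
    ⁅blockDiagonalHom x, blockUnipotentHom (.ofAdd r)⁆ ^ p = 1 := by
  rw [commutatorElement_def, blockDiagonalHom_mul_blockUnipotentHom_mul_inv, ← map_inv, ← map_mul,
    blockUnipotentHom_pow_eq_one]

theorem not_commute_blockDiagonalHom_conj {p k : ℕ} [CharP R p] (hpk : p.Coprime k)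
    {C X : SpecialLinearGroup m R} (hC : C ^ k = 1) (hCX : ¬Commute C X) :
    ¬Commute (blockDiagonalHom (C, C))
      (blockUnipotentHom (.ofAdd (X : Matrix m m R)) * blockDiagonalHom (C, C) *
        (blockUnipotentHom (.ofAdd (X : Matrix m m R)))⁻¹) := by
  intro h
  have diagonal_pow : (blockDiagonalHom (C, C)) ^ k = 1 := by
    rw [← map_pow, Prod.pow_mk, hC, Prod.mk_one_one, map_one]
  have commute := commute_of_commute_conj hpk diagonal_pow
    (by rw [← map_inv, commutator_blockDiagonalHom_blockUnipotentHom_pow_eq_one]) h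
  exact hCX (commute_coe_iff_s7.1 (commute_blockDiagonalHom_blockUnipotentHom_iff.1 commute))

theorem exists_commute_blockUnipotentHom_one_not_commute {C X : SpecialLinearGroup m R}
    (hCX : ¬Commute C X) :
    ∃ g, Commute (blockUnipotentHom (.ofAdd (1 : Matrix m m R))) g ∧
      ¬Commute (blockUnipotentHom (.ofAdd (C : Matrix m m R))) g := by
  refine ⟨blockDiagonalHom (X, X), ?_, fun h => hCX ?_⟩
  · exact (commute_blockDiagonalHom_blockUnipotentHom_iff.2 (by simp)).symm
  · exact commute_coe_iff_s7.1 (commute_blockDiagonalHom_blockUnipotentHom_iff.1 h.symm).symm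

theorem exists_commute_blockUnipotentHom_not_commute_one {C X : SpecialLinearGroup m R}
    (hCX : ¬Commute C X) :
    ∃ g, Commute (blockUnipotentHom (.ofAdd (C : Matrix m m R))) g ∧
      ¬Commute (blockUnipotentHom (.ofAdd (1 : Matrix m m R))) g := by
  refine ⟨blockDiagonalHom (C * X * C⁻¹, X), ?_, fun h => hCX ?_⟩
  · refine (commute_blockDiagonalHom_blockUnipotentHom_iff.2 ?_).symm
    exact congrArg Subtype.val (inv_mul_cancel_right (C * X) C)
  · have conj_eq := commute_blockDiagonalHom_blockUnipotentHom_iff.1 h.symm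
    rw [toAdd_ofAdd, mul_one, one_mul] at conj_eq
    exact mul_inv_eq_iff_eq_mul.1 (Subtype.ext conj_eq)

theorem not_isChordal_powerGraph_of_not_commute_block {G : Type*} [Group G] {p k : ℕ} [CharP R p]
    (hpk : p.Coprime k) {φ : SpecialLinearGroup (m ⊕ m) R →* G} (hφ : φ.ker ≤ center _)
    {C X : SpecialLinearGroup m R} (hC : C ^ k = 1) (hCX : ¬Commute C X) :
    ¬IsChordal (powerGraph G) := by
  let u (r : Matrix m m R) := blockUnipotentHom (.ofAdd r)
  let s := blockDiagonalHom (C, C)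
  have s_pow : s ^ k = 1 := by rw [← map_pow, Prod.pow_mk, hC, Prod.mk_one_one, map_one]
  have one_commute : Commute (u 1) s :=
    (commute_blockDiagonalHom_blockUnipotentHom_iff.2 (by simp)).symm
  have C_commute : Commute (u C) s :=
    (commute_blockDiagonalHom_blockUnipotentHom_iff.2 rfl).symm
  have commute_conj {r : Matrix m m R} (h : Commute (u r) s) :
      Commute (u r) (u X * s * (u X)⁻¹) := by
    have u_commute : Commute (u r) (u X) := (Commute.all (Multiplicative.ofAdd r) _).map _
    exact (u_commute.mul_right h).mul_right u_commute.inv_right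
  have not_commute_conj : ¬Commute s (u X * s * (u X)⁻¹) :=
    not_commute_blockDiagonalHom_conj hpk hC hCX
  refine not_isChordal_powerGraph_of_commuting_cycle_of_ker_le_center hφ (m := 2) le_rfl hpk
    (t := ![u 1, u C]) (s := ![s, u X * s * (u X)⁻¹]) ?_ ?_ ?_ ?_ ?_ ?_
  all_goals simp only [Fin.forall_fin_two]
  · exact ⟨blockUnipotentHom_pow_eq_one p _, blockUnipotentHom_pow_eq_one p _⟩
  · exact ⟨s_pow, by simp [conj_pow, s_pow]⟩
  · exact ⟨⟨by simp, fun _ => exists_commute_blockUnipotentHom_not_commute_one hCX⟩,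
      ⟨fun _ => exists_commute_blockUnipotentHom_one_not_commute hCX, by simp⟩⟩
  · exact ⟨⟨by simp, fun _ => ⟨_, .refl _, not_commute_conj⟩⟩,
      ⟨fun _ => ⟨_, .refl _, fun h => not_commute_conj h.symm⟩, by simp⟩⟩
  · exact ⟨one_commute, commute_conj C_commute⟩
  · exact ⟨C_commute, commute_conj one_commute⟩

theorem exists_pow_eq_one_and_not_commute_of_prime (R : Type*) [CommRing R] [Nontrivial R] {p : ℕ}
    (hp : p.Prime) :
    ∃ k, p.Coprime k ∧ ∃ C X : SpecialLinearGroup (Fin 2) R, C ^ k = 1 ∧ ¬Commute C X := by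
  have det_X : (!![1, 1; 0, 1] : Matrix (Fin 2) (Fin 2) R).det = 1 := by simp
  by_cases p_three : p = 3
  · have pow_four : (!![0, -1; 1, 0] : Matrix (Fin 2) (Fin 2) R) ^ 4 = 1 := by
      simp [pow_succ, one_fin_two]
    refine ⟨4, by rw [p_three]; decide, ⟨!![0, -1; 1, 0], by simp⟩, ⟨_, det_X⟩,
      Subtype.ext pow_four, fun h => ?_⟩
    simpa using congrFun₂ (commute_coe_iff_s7.2 h).eq 0 0
  · have pow_three : (!![0, -1; 1, -1] : Matrix (Fin 2) (Fin 2) R) ^ 3 = 1 := by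
      simp [pow_succ, one_fin_two]
    refine ⟨3, (Nat.coprime_primes hp Nat.prime_three).2 p_three,
      ⟨!![0, -1; 1, -1], by simp⟩, ⟨_, det_X⟩, Subtype.ext pow_three, fun h => ?_⟩
    simpa using congrFun₂ (commute_coe_iff_s7.2 h).eq 0 0

theorem not_isChordal_powerGraph_PSL_of_four_le (F : Type*) [Field F] (p : ℕ) [Fact p.Prime]
    [CharP F p] {n : ℕ} (hn : 4 ≤ n) : ¬IsChordal (powerGraph (PSL n F)) := by
  obtain ⟨k, hpk, C, X, hC, hCX⟩ :=
    exists_pow_eq_one_and_not_commute_of_prime F (Fact.out : p.Prime)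
  have e : (Fin 2 ⊕ Fin 2) ⊕ Fin (n - 4) ≃ Fin n :=
    Fintype.equivOfCardEq (by simp only [Fintype.card_sum, Fintype.card_fin]; omega)
  exact not_isChordal_powerGraph_of_not_commute_block hpk
    (ker_mk'_center_comp_le_center (cornerHom_injective e)) hC hCX

end BlockMatrices

section RankOne

open Matrix

variable {n R : Type*} [Fintype n] [DecidableEq n] [CommRing R] {u v : n → R}

theorem det_one_add_vecMulVec (u v : n → R) : (1 + vecMulVec u v).det = 1 + v ⬝ᵥ u := by
  rw [vecMulVec_eq Unit, det_one_add_replicateCol_mul_replicateRow]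

/-- The one-parameter group `c ↦ 1 + c u vᵀ` of transvections with centre `u` and axis the kernel
of `v`. -/
def transvectionHom (h : v ⬝ᵥ u = 0) : Multiplicative R →* SpecialLinearGroup n R :=
  specialLinearLift
    { toFun c := 1 + c.toAdd • vecMulVec u v
      map_one' := by simp
      map_mul' c d := by
        simp only [toAdd_mul, mul_add, add_mul, one_mul, mul_one, smul_mul_smul_comm,
          vecMulVec_mul_vecMulVec, h, zero_smul, vecMulVec_zero, smul_zero, add_smul]
        abel }
    (fun c => (congrArg det (by simp)).trans
      ((det_one_add_vecMulVec (c.toAdd • u) v).trans (by simp [h])))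

/-- The one-parameter group of homologies: `homology h b` scales `u` by `b` and fixes the kernel
of `v`. -/
def homology (h : v ⬝ᵥ u = 1) : R →* Matrix n n R where
  toFun b := 1 + (b - 1) • vecMulVec u v
  map_one' := by simp
  map_mul' b c := by
    simp only [mul_add, add_mul, one_mul, mul_one, smul_mul_smul_comm, vecMulVec_mul_vecMulVec, h,
      one_smul]
    module

theorem homology_apply (h : v ⬝ᵥ u = 1) (b : R) : homology h b = 1 + (b - 1) • vecMulVec u v :=
  rfl

theorem det_homology (h : v ⬝ᵥ u = 1) (b : R) : (homology h b).det = b := by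
  rw [homology_apply, ← smul_vecMulVec, det_one_add_vecMulVec, dotProduct_smul, h, smul_eq_mul]
  ring

/-- The homologies with factor `a⁻ⁿ`, normalized to determinant 1 by the scalar `a`. -/
def homologyHom (h : v ⬝ᵥ u = 1) : Rˣ →* SpecialLinearGroup n R :=
  specialLinearLift
    { toFun a := (a : R) • homology h (a⁻¹ ^ Fintype.card n : Rˣ)
      map_one' := by simp
      map_mul' a b := by
        simp only [mul_inv, mul_pow, Units.val_mul, map_mul, smul_mul_smul_comm] }
    (fun a => (det_smul _ _).trans (by rw [det_homology]; simp [← mul_pow]))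

theorem coe_transvectionHom (h : v ⬝ᵥ u = 0) (c : Multiplicative R) :
    (transvectionHom h c : Matrix n n R) = 1 + c.toAdd • vecMulVec u v :=
  rfl

theorem coe_homologyHom (h : v ⬝ᵥ u = 1) (a : Rˣ) :
    (homologyHom h a : Matrix n n R) =
      (a : R) • homology h (a⁻¹ ^ Fintype.card n : Rˣ) :=
  rfl

theorem transvectionHom_pow_eq_one (p : ℕ) [CharP R p] (h : v ⬝ᵥ u = 0) (c : Multiplicative R) :
    transvectionHom h c ^ p = 1 := by
  rw [← map_pow, ← ofAdd_toAdd c, ← ofAdd_nsmul, nsmul_eq_mul, CharP.cast_eq_zero, zero_mul,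
    ofAdd_zero, map_one]

theorem commute_one_add_left_iff {A : Type*} [Ring A] {x y : A} :
    Commute (1 + x) y ↔ Commute x y := by
  simp [commute_iff_eq, add_mul, mul_add]

theorem commute_transvectionHom_one_iff (h : v ⬝ᵥ u = 0) {M : Matrix n n R} :
    Commute (transvectionHom h (.ofAdd 1) : Matrix n n R) M ↔ Commute (vecMulVec u v) M := by
  rw [coe_transvectionHom, toAdd_ofAdd, one_smul, commute_one_add_left_iff]

theorem commute_homologyHom_iff {F : Type*} [Field F] {u v : n → F} (h : v ⬝ᵥ u = 1) {a : Fˣ}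
    (ha : a ^ Fintype.card n ≠ 1) {M : Matrix n n F} :
    Commute (homologyHom h a : Matrix n n F) M ↔ Commute (vecMulVec u v) M := by
  have ne_zero : ((a⁻¹ ^ Fintype.card n : Fˣ) - 1 : F) ≠ 0 := by
    rwa [sub_ne_zero, Ne, Units.val_eq_one, inv_pow, inv_eq_one]
  rw [coe_homologyHom, Commute.smul_left_iff₀ a.ne_zero, homology_apply,
    commute_one_add_left_iff, Commute.smul_left_iff₀ ne_zero]

end RankOne

section DimensionThree

open Matrix

section CoordinateMatrices

variable {R : Type*} [CommRing R] {i j : Fin 3}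

theorem one_sub_single_dotProduct_single (i : Fin 3) :
    (1 - Pi.single i 1 : Fin 3 → R) ⬝ᵥ Pi.single i 1 = 0 := by
  simp

theorem single_dotProduct_two_smul_single_sub_one (i : Fin 3) :
    (Pi.single i 1 : Fin 3 → R) ⬝ᵥ (2 • Pi.single i 1 - 1) = 1 := by
  norm_num

variable (R) in
/-- The transvection `1 + eᵢ (1 - eᵢ)ᵀ`. -/
def coordinateTransvection (i : Fin 3) : SpecialLinearGroup (Fin 3) R :=
  transvectionHom (one_sub_single_dotProduct_single i) (.ofAdd 1)

/-- The normalized homology with centre `2 eᵢ - 1` and axis the kernel of `eᵢᵀ`. -/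
def coordinateHomology (a : Rˣ) (i : Fin 3) : SpecialLinearGroup (Fin 3) R :=
  homologyHom (single_dotProduct_two_smul_single_sub_one i) a

theorem coordinateTransvection_pow_eq_one (p : ℕ) [CharP R p] (i : Fin 3) :
    coordinateTransvection R i ^ p = 1 :=
  transvectionHom_pow_eq_one p _ _

theorem coordinateHomology_pow_eq_one {a : Rˣ} {k : ℕ} (ha : a ^ k = 1) (i : Fin 3) :
    coordinateHomology a i ^ k = 1 := by
  rw [coordinateHomology, ← map_pow, ha, map_one]

theorem not_commute_coordinateTransvection [Nontrivial R] (hij : i ≠ j) :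
    ¬Commute (coordinateTransvection R i) (coordinateTransvection R j) := by
  rw [← commute_coe_iff_s7, coordinateTransvection, coordinateTransvection,
    commute_transvectionHom_one_iff, Commute.symm_iff, commute_transvectionHom_one_iff]
  intro h
  simpa [vecMulVec_mul_vecMulVec, vecMulVec_apply, hij, hij.symm] using congrFun₂ h.eq i i

theorem one_sub_single_dotProduct_two_smul_single_sub_one (hij : i ≠ j) :
    (1 - Pi.single i 1 : Fin 3 → R) ⬝ᵥ (2 • Pi.single j 1 - 1) = 0 := by
  have one_dotProduct_one : (1 : Fin 3 → R) ⬝ᵥ 1 = 3 := by simp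
  rw [sub_dotProduct, dotProduct_sub, dotProduct_sub, dotProduct_smul, dotProduct_smul,
    one_dotProduct_one, dotProduct_single_one, single_dotProduct, single_one_dotProduct,
    Pi.single_eq_of_ne hij]
  norm_num

theorem commute_coordinateTransvection_coordinateHomology {F : Type*} [Field F] {a : Fˣ}
    (ha : a ^ 3 ≠ 1) (hij : i ≠ j) :
    Commute (coordinateTransvection F i) (coordinateHomology a j) := by
  rw [← commute_coe_iff_s7, coordinateTransvection, coordinateHomology,
    commute_transvectionHom_one_iff, Commute.symm_iff, commute_homologyHom_iff _ ha]
  rw [commute_iff_eq, vecMulVec_mul_vecMulVec, vecMulVec_mul_vecMulVec,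
    one_sub_single_dotProduct_two_smul_single_sub_one hij, single_dotProduct,
    Pi.single_eq_of_ne hij.symm]
  simp

theorem not_commute_coordinateHomology {F : Type*} [Field F] {a : Fˣ} (ha : a ^ 3 ≠ 1)
    (hij : i ≠ j) : ¬Commute (coordinateHomology a i) (coordinateHomology a j) := by
  rw [← commute_coe_iff_s7, coordinateHomology, coordinateHomology,
    commute_homologyHom_iff _ ha, Commute.symm_iff, commute_homologyHom_iff _ ha]
  intro h
  simpa [vecMulVec_mul_vecMulVec, vecMulVec_apply, hij, hij.symm] using congrFun₂ h.eq i i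

end CoordinateMatrices

theorem not_isChordal_powerGraph_of_unit_pow_three_ne_one {G F : Type*} [Group G] [Field F]
    {p k : ℕ} [CharP F p] (hpk : p.Coprime k) {a : Fˣ} (ha : a ^ k = 1) (ha3 : a ^ 3 ≠ 1)
    {φ : SpecialLinearGroup (Fin 3) F →* G} (hφ : φ.ker ≤ center _) :
    ¬IsChordal (powerGraph G) := by
  refine not_isChordal_powerGraph_of_commuting_cycle_of_ker_le_center hφ (m := 3) (by decide) hpk
    (t := coordinateTransvection F) (s := fun i => coordinateHomology a (i + 2))
    (coordinateTransvection_pow_eq_one p) (fun i => coordinateHomology_pow_eq_one ha (i + 2))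
    (fun i j hij => ⟨_, .refl _, not_commute_coordinateTransvection hij⟩)
    (fun i j hij => ⟨_, .refl _, not_commute_coordinateHomology ha3 (by simpa)⟩)
    (fun i => commute_coordinateTransvection_coordinateHomology ha3 (by simp))
    (fun i => commute_coordinateTransvection_coordinateHomology ha3 (by decide +revert))

theorem exists_unit_pow_three_ne_one {F : Type*} [Field F] [Fintype F] (two : Fintype.card F ≠ 2)
    (four : Fintype.card F ≠ 4) : ∃ a : Fˣ, a ^ 3 ≠ 1 := by
  classical
  obtain ⟨a, ha⟩ := IsCyclic.exists_ofOrder_eq_natCard (α := Fˣ)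
  refine ⟨a, fun h => ?_⟩
  have card_units_dvd : Fintype.card F - 1 ∣ 3 := by
    rw [← Fintype.card_units, ← Nat.card_eq_fintype_card, ← ha]
    exact orderOf_dvd_of_pow_eq_one h
  have := Fintype.one_lt_card (α := F)
  rcases (Nat.dvd_prime Nat.prime_three).1 card_units_dvd with h | h <;> omega

theorem not_isChordal_powerGraph_PSL_three {F : Type*} [Field F] [Fintype F]
    (two : Fintype.card F ≠ 2) (four : Fintype.card F ≠ 4) :
    ¬IsChordal (powerGraph (PSL 3 F)) := by
  obtain ⟨p, hp⟩ := CharP.exists F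
  obtain ⟨r, -, card_eq⟩ := FiniteField.card F p
  obtain ⟨a, ha⟩ := exists_unit_pow_three_ne_one two four
  have coprime : p.Coprime (Fintype.card F - 1) := by
    have coprime_card := (Nat.coprime_self_sub_right (Fintype.card_pos (α := F))).2
      (Nat.coprime_one_right _)
    exact coprime_card.coprime_dvd_left (card_eq ▸ dvd_pow_self p r.ne_zero)
  have pow_eq_one : a ^ (Fintype.card F - 1) = 1 :=
    Units.ext (by simpa using FiniteField.pow_card_sub_one_eq_one (a : F) a.ne_zero)
  exact not_isChordal_powerGraph_of_unit_pow_three_ne_one coprime pow_eq_one ha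
    (φ := QuotientGroup.mk' (center _)) (by rw [QuotientGroup.ker_mk'])

end DimensionThree

section SmallFields

open Matrix Polynomial

theorem exists_pow_three_eq_of_det_eq_one {R : Type*} [CommRing R] {M : Matrix (Fin 3) (Fin 3) R}
    (hM : M.det = 1) : ∃ α β : R, M ^ 3 = α • M ^ 2 + β • M + 1 := by
  nontriviality R
  have coeff_zero : M.charpoly.coeff 0 = -1 := by
    have := M.det_eq_sign_charpoly_coeff
    simp only [hM, Fintype.card_fin] at this
    linear_combination this
  have coeff_three : M.charpoly.coeff 3 = 1 := by
    simpa [M.charpoly_natDegree_eq_dim] using M.charpoly_monic.coeff_natDegree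
  refine ⟨-M.charpoly.coeff 2, -M.charpoly.coeff 1, ?_⟩
  have cayley_hamilton := M.aeval_self_charpoly
  rw [aeval_eq_sum_range, M.charpoly_natDegree_eq_dim, Fintype.card_fin] at cayley_hamilton
  simp only [Finset.sum_range_succ, Finset.sum_range_zero, coeff_zero, coeff_three, pow_zero,
    pow_one] at cayley_hamilton
  rw [← sub_eq_zero, ← cayley_hamilton]
  module

section Cubic

variable {R A : Type*} [CommRing R] [Ring A] [Algebra R A] {α β : R} {x : A}

theorem pow_succ_eq_of_cubic (hx : x ^ 3 = α • x ^ 2 + β • x + 1) {k : ℕ} {a b c : R}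
    (hk : x ^ k = a • x ^ 2 + b • x + c • 1) :
    x ^ (k + 1) = (a * α + b) • x ^ 2 + (a * β + c) • x + a • 1 := by
  calc x ^ (k + 1) = a • x ^ 3 + b • x ^ 2 + c • x := by
        rw [pow_succ, hk]
        simp only [add_mul, smul_mul_assoc, one_mul, ← pow_succ, ← pow_two]
    _ = _ := by rw [hx]; module

theorem pow_four_eq_of_cubic (hx : x ^ 3 = α • x ^ 2 + β • x + 1) :
    x ^ 4 = (α ^ 2 + β) • x ^ 2 + (α * β + 1) • x + α • 1 := by
  have pow_three : x ^ 3 = α • x ^ 2 + β • x + (1 : R) • 1 := by rwa [one_smul]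
  exact (pow_succ_eq_of_cubic hx pow_three).trans (by module)

theorem pow_five_eq_of_cubic (hx : x ^ 3 = α • x ^ 2 + β • x + 1) :
    x ^ 5 = (α ^ 3 + 2 * α * β + 1) • x ^ 2 + (α ^ 2 * β + β ^ 2 + α) • x +
      (α ^ 2 + β) • 1 := by
  exact (pow_succ_eq_of_cubic hx (pow_four_eq_of_cubic hx)).trans (by module)

theorem pow_seven_eq_of_cubic (hx : x ^ 3 = α • x ^ 2 + β • x + 1) :
    x ^ 7 = (α ^ 5 + 4 * α ^ 3 * β + 3 * α ^ 2 + 3 * α * β ^ 2 + 2 * β) • x ^ 2 +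
      (α ^ 4 * β + 3 * α ^ 2 * β ^ 2 + 4 * α * β + β ^ 3 + α ^ 3 + 1) • x +
      (α ^ 4 + 3 * α ^ 2 * β + β ^ 2 + 2 * α) • 1 := by
  exact (pow_succ_eq_of_cubic hx (pow_succ_eq_of_cubic hx (pow_five_eq_of_cubic hx))).trans
    (by module)

theorem eq_smul_one_of_eq_of_coeff_eq_zero {y : A} {a b c : R}
    (hy : y = a • x ^ 2 + b • x + c • 1) (ha : a = 0) (hb : b = 0) : y = c • 1 := by
  simpa [ha, hb] using hy

end Cubic

theorem exists_prime_pow_eq_smul_one_of_cubic {F A : Type*} [Field F] [Ring A] [Algebra F A]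
    (pow_four : ∀ a : F, a ^ 4 = a) {α β : F} {x : A} (hx : x ^ 3 = α • x ^ 2 + β • x + 1) :
    ∃ (p k : ℕ) (r : F), p.Prime ∧ x ^ p ^ k = r • 1 := by
  have two_eq_zero : (2 : F) = 0 := by linear_combination pow_four (-1)
  have pow_three {a : F} (ha : a ≠ 0) : a ^ 3 = 1 :=
    mul_right_cancel₀ ha (by linear_combination pow_four a)
  by_cases hα : α = 0 <;> by_cases hβ : β = 0
  · exact ⟨3, 1, 1, by norm_num, by simpa [hα, hβ] using hx⟩
  · have := pow_three hβ
    exact ⟨7, 1, _, by norm_num,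
      eq_smul_one_of_eq_of_coeff_eq_zero (pow_seven_eq_of_cubic hx) (by grind) (by grind)⟩
  · have := pow_three hα
    exact ⟨7, 1, _, by norm_num,
      eq_smul_one_of_eq_of_coeff_eq_zero (pow_seven_eq_of_cubic hx) (by grind) (by grind)⟩
  · have hα3 := pow_three hα
    have hβ3 := pow_three hβ
    by_cases hαβ : α ^ 2 + β = 0
    · exact ⟨2, 2, _, by norm_num,
        eq_smul_one_of_eq_of_coeff_eq_zero (pow_four_eq_of_cubic hx) hαβ (by grind)⟩
    · have coeff_one : α ^ 2 * β + β ^ 2 + α = 0 := mul_left_cancel₀ hαβ (by grind)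
      exact ⟨5, 1, _, by norm_num,
        eq_smul_one_of_eq_of_coeff_eq_zero (pow_five_eq_of_cubic hx) (by grind) coeff_one⟩

theorem mk_pow_eq_one_of_coe_pow_eq_smul_one {n : ℕ} {F : Type*} [Field F]
    {M : SpecialLinearGroup (Fin n) F} {k : ℕ} {r : F}
    (h : (M : Matrix (Fin n) (Fin n) F) ^ k = r • 1) : (M : PSL n F) ^ k = 1 := by
  have commute_pow (N : SpecialLinearGroup (Fin n) F) : Commute N (M ^ k) := by
    refine commute_coe_iff_s7.1 ?_
    rw [Matrix.SpecialLinearGroup.coe_pow, h]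
    exact (Commute.one_right _).smul_right r
  rw [← QuotientGroup.mk_pow, QuotientGroup.eq_one_iff]
  exact mem_center_iff.2 commute_pow

theorem isEPPO_PSL_three {F : Type*} [Field F] (pow_four : ∀ a : F, a ^ 4 = a) :
    IsEPPO (PSL 3 F) := by
  intro g
  induction g using QuotientGroup.induction_on with | H M
  obtain ⟨α, β, cubic⟩ := exists_pow_three_eq_of_det_eq_one M.det_coe
  obtain ⟨p, k, r, prime, hr⟩ := exists_prime_pow_eq_smul_one_of_cubic pow_four cubic
  obtain ⟨l, -, hl⟩ := (Nat.dvd_prime_pow prime).1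
    (orderOf_dvd_of_pow_eq_one (mk_pow_eq_one_of_coe_pow_eq_smul_one hr))
  exact ⟨p, l, prime, hl⟩

theorem pow_four_eq_self_of_card {F : Type*} [Field F] [Fintype F]
    (hF : Fintype.card F = 2 ∨ Fintype.card F = 4) (a : F) : a ^ 4 = a := by
  rcases hF with two | four
  · rw [show 4 = Fintype.card F * Fintype.card F by rw [two], pow_mul, FiniteField.pow_card,
      FiniteField.pow_card]
  · rw [← four, FiniteField.pow_card]

end SmallFields

theorem stmt7 (F : Type*) [Field F] [Fintype F] (q n : ℕ) (hq : Fintype.card F = q)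
    (hn : 3 ≤ n) :
    IsChordal (powerGraph (PSL n F)) ↔ n = 3 ∧ (q = 2 ∨ q = 4) := by
  subst hq
  constructor
  · intro chordal
    obtain ⟨p, _⟩ := CharP.exists F
    have : Fact p.Prime := ⟨CharP.char_is_prime F p⟩
    obtain rfl : n = 3 := by
      by_contra ne_three
      exact not_isChordal_powerGraph_PSL_of_four_le F p (by omega) chordal
    refine ⟨rfl, ?_⟩
    by_contra! card_ne
    exact not_isChordal_powerGraph_PSL_three card_ne.1 card_ne.2 chordal
  · rintro ⟨rfl, card_eq⟩
    exact (isEPPO_PSL_three (pow_four_eq_self_of_card card_eq)).isChordal_powerGraph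
end

section
/- Let G be a finite group. If there exists an element g ∈ G and distinct primes p, q with p²q² dividing the order of g, or there exists an element g ∈ G and pairwise distinct primes p, q, r with pqr dividing the order of g, then the power graph of G is not chordal. -/
/-!
For divisors `d`, `e` of `orderOf g`, the element `g ^ d` is a power of `g ^ e` exactly when
`e ∣ d`. So the divisors of `orderOf g`, compared by divisibility, sit inside the power graph as an
induced subgraph. The divisors of `p²q²` contain the induced 4-cycle `p, p²q, q, pq²`, and those of
`pqr` the induced 6-cycle `p, pq, q, qr, r, pr`. An element of infinite order has `orderOf g = 0`,
which every number divides; the same argument then takes place in `⟨g⟩ ≅ ℤ`.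
-/

open scoped Function

theorem IsChordal.of_embedding {V W : Type*} {Γ : SimpleGraph V} {Δ : SimpleGraph W}
    (hΔ : IsChordal Δ) (φ : Γ ↪g Δ) : IsChordal Γ := fun n hn =>
  ⟨fun ψ => (hΔ n hn).false (φ.comp ψ)⟩

/-- The comparability graph of a preorder: distinct elements are adjacent iff one is below the
other. It is used for the exponent vectors of divisors. -/
def comparabilityGraph (α : Type*) [Preorder α] : SimpleGraph α :=
  SimpleGraph.fromRel (· ≤ ·)

theorem not_isChordal_comparabilityGraph_Iic_two_two :
    ¬ IsChordal (comparabilityGraph (Set.Iic (![2, 2] : Fin 2 → ℕ))) := by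
  let cycle (i : Fin 4) : Set.Iic ![2, 2] :=
    ⟨![![1, 0], ![2, 1], ![0, 1], ![1, 2]] i, fun j => by decide +revert⟩
  have cycle_injective : Function.Injective cycle := by decide
  have cycle_adj (i j : Fin 4) : (comparabilityGraph _).Adj (cycle i) (cycle j) ↔
      (SimpleGraph.cycleGraph 4).Adj i j := by
    simp only [comparabilityGraph, SimpleGraph.fromRel_adj, SimpleGraph.cycleGraph_adj,
      ← Subtype.coe_le_coe, Pi.le_def]
    decide +revert
  exact fun h => (h 4 le_rfl).false ⟨⟨cycle, cycle_injective⟩, cycle_adj _ _⟩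

theorem not_isChordal_comparabilityGraph_Iic_one_one_one :
    ¬ IsChordal (comparabilityGraph (Set.Iic (![1, 1, 1] : Fin 3 → ℕ))) := by
  let cycle (i : Fin 6) : Set.Iic ![1, 1, 1] :=
    ⟨![![1, 0, 0], ![1, 1, 0], ![0, 1, 0], ![0, 1, 1], ![0, 0, 1], ![1, 0, 1]] i,
      fun j => by decide +revert⟩
  have cycle_injective : Function.Injective cycle := by decide
  have cycle_adj (i j : Fin 6) : (comparabilityGraph _).Adj (cycle i) (cycle j) ↔
      (SimpleGraph.cycleGraph 6).Adj i j := by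
    simp only [comparabilityGraph, SimpleGraph.fromRel_adj, SimpleGraph.cycleGraph_adj,
      ← Subtype.coe_le_coe, Pi.le_def]
    decide +revert
  exact fun h => (h 6 (by decide)).false ⟨⟨cycle, cycle_injective⟩, cycle_adj _ _⟩

theorem prod_pow_dvd_prod_pow_iff_le {ι : Type*} [Fintype ι] {p : ι → ℕ}
    (one_lt : ∀ i, 1 < p i) (coprime : Pairwise (Nat.Coprime on p)) {a b : ι → ℕ} :
    ∏ i, p i ^ a i ∣ ∏ i, p i ^ b i ↔ a ≤ b := by
  classical
  refine ⟨fun h i => ?_, fun h => Finset.prod_dvd_prod_of_dvd _ _ fun i _ => pow_dvd_pow _ (h i)⟩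
  have dvd_prod : p i ^ a i ∣ p i ^ b i * ∏ j ∈ Finset.univ.erase i, p j ^ b j := by
    rw [Finset.mul_prod_erase _ (fun j => p j ^ b j) (Finset.mem_univ i)]
    exact (Finset.dvd_prod_of_mem _ (Finset.mem_univ i)).trans h
  have coprime_prod : (p i ^ a i).Coprime (∏ j ∈ Finset.univ.erase i, p j ^ b j) :=
    Nat.Coprime.prod_right fun j hj => (coprime (Finset.ne_of_mem_erase hj).symm).pow _ _
  exact (Nat.pow_dvd_pow_iff_le_right (one_lt i)).1 (coprime_prod.dvd_of_dvd_mul_right dvd_prod)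

section PowerGraph

variable {G : Type*} [Group G] {g : G}

theorem pow_mem_zpowers_pow_iff_dvd {d e : ℕ} (he : e ∣ orderOf g) :
    g ^ d ∈ Subgroup.zpowers (g ^ e) ↔ e ∣ d := by
  constructor
  · rintro ⟨k, hk⟩
    have zpow_eq : g ^ (e * k : ℤ) = g ^ (d : ℤ) := by
      rw [zpow_mul, zpow_natCast, zpow_natCast]
      exact hk
    have modEq : (e * k : ℤ) ≡ d [ZMOD e] :=
      (zpow_eq_zpow_iff_modEq.1 zpow_eq).of_dvd (Int.natCast_dvd_natCast.2 he)
    exact Int.natCast_dvd_natCast.1 (modEq.dvd_iff.1 (dvd_mul_right _ _))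
  · rintro ⟨k, rfl⟩
    rw [pow_mul]
    exact Subgroup.npow_mem_zpowers _ _

theorem IsChordal.comparabilityGraph_Iic_of_powerGraph (hG : IsChordal (powerGraph G))
    {ι : Type*} [Fintype ι] {p e : ι → ℕ} (one_lt : ∀ i, 1 < p i)
    (coprime : Pairwise (Nat.Coprime on p)) (hg : ∏ i, p i ^ e i ∣ orderOf g) :
    IsChordal (comparabilityGraph (Set.Iic e)) := by
  let elt (a : Set.Iic e) : G := g ^ ∏ i, p i ^ a.1 i
  have elt_mem_zpowers (a b : Set.Iic e) : elt a ∈ Subgroup.zpowers (elt b) ↔ b ≤ a := by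
    have dvd_orderOf : ∏ i, p i ^ b.1 i ∣ orderOf g :=
      ((prod_pow_dvd_prod_pow_iff_le one_lt coprime).2 b.2).trans hg
    rw [pow_mem_zpowers_pow_iff_dvd dvd_orderOf, prod_pow_dvd_prod_pow_iff_le one_lt coprime,
      Subtype.coe_le_coe]
  have elt_injective : Function.Injective elt := fun a b hab =>
    le_antisymm ((elt_mem_zpowers b a).1 (hab ▸ Subgroup.mem_zpowers _))
      ((elt_mem_zpowers a b).1 (hab ▸ Subgroup.mem_zpowers _))
  refine hG.of_embedding ⟨⟨elt, elt_injective⟩, fun {a b} => ?_⟩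
  simp only [powerGraph, comparabilityGraph, SimpleGraph.fromRel_adj, Function.Embedding.coeFn_mk,
    elt_injective.ne_iff, elt_mem_zpowers, or_comm]

end PowerGraph

theorem stmt9_general (G : Type*) [Group G]
    (h : (∃ (g : G) (p q : ℕ), 1 < p ∧ 1 < q ∧ p.Coprime q ∧ p ^ 2 * q ^ 2 ∣ orderOf g) ∨
      (∃ (g : G) (p q r : ℕ), 1 < p ∧ 1 < q ∧ 1 < r ∧
        p.Coprime q ∧ p.Coprime r ∧ q.Coprime r ∧ p * q * r ∣ orderOf g)) :
    ¬ IsChordal (powerGraph G) := by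
  intro hG
  rcases h with ⟨g, p, q, hp, hq, hpq, hg⟩ | ⟨g, p, q, r, hp, hq, hr, hpq, hpr, hqr, hg⟩
  · have one_lt : ∀ i, 1 < ![p, q] i := by simp [Fin.forall_fin_two, hp, hq]
    have coprime : Pairwise (Nat.Coprime on ![p, q]) := by
      simpa [Pairwise, Fin.forall_fin_two, Function.onFun] using ⟨hpq, hpq.symm⟩
    refine not_isChordal_comparabilityGraph_Iic_two_two
      (hG.comparabilityGraph_Iic_of_powerGraph (g := g) one_lt coprime ?_)
    simpa [Fin.prod_univ_two] using hg
  · have one_lt : ∀ i, 1 < ![p, q, r] i := by simp [Fin.forall_fin_succ, hp, hq, hr]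
    have coprime : Pairwise (Nat.Coprime on ![p, q, r]) := by
      simpa [Pairwise, Fin.forall_fin_succ, Function.onFun]
        using ⟨⟨hpq, hpr⟩, ⟨hpq.symm, hqr⟩, hpr.symm, hqr.symm⟩
    refine not_isChordal_comparabilityGraph_Iic_one_one_one
      (hG.comparabilityGraph_Iic_of_powerGraph (g := g) one_lt coprime ?_)
    simpa [Fin.prod_univ_three] using hg

theorem stmt9 (G : Type*) [Group G] [Fintype G]
    (h : (∃ (g : G) (p q : ℕ), p.Prime ∧ q.Prime ∧ p ≠ q ∧ p ^ 2 * q ^ 2 ∣ orderOf g) ∨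
      (∃ (g : G) (p q r : ℕ), p.Prime ∧ q.Prime ∧ r.Prime ∧
        p ≠ q ∧ p ≠ r ∧ q ≠ r ∧ p * q * r ∣ orderOf g)) :
    ¬ IsChordal (powerGraph G) := by
  refine stmt9_general G (h.imp ?_ ?_)
  · rintro ⟨g, p, q, hp, hq, hpq, hg⟩
    exact ⟨g, p, q, hp.one_lt, hq.one_lt, (Nat.coprime_primes hp hq).2 hpq, hg⟩
  · rintro ⟨g, p, q, r, hp, hq, hr, hpq, hpr, hqr, hg⟩
    exact ⟨g, p, q, r, hp.one_lt, hq.one_lt, hr.one_lt, (Nat.coprime_primes hp hq).2 hpq,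
      (Nat.coprime_primes hp hr).2 hpr, (Nat.coprime_primes hq hr).2 hqr, hg⟩
end
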